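/- (Stability of the modulation equations under O(b^k) perturbations.) Let 0 < α < 1, β∞ > 0, let P₁, P₂ be polynomials as in the construction (P₁ of total degree ≥ 3 in (b,β̃); P₂ = −2bβ̃ plus total degree ≥ 3 terms), and let k > 2/(1−α) + 1. Let t̄ < 0 be small enough and let (λ_e, b_e, β̃_e, r_e, γ_e) be the exact solution of the modulation system on [t_e, 0). Suppose (λ, b, β̃, r, γ) is defined for t ≤ t̄, satisfies (λ, b, β̃, r, γ)(t̄) = (λ_e, b_e, β̃_e, r_e, γ_e)(t̄), the constraint b = (2β/α)(λ/r) with β = β∞ + β̃, and the perturbed system λ_s/λ + b − P₁(b,β̃) = O(b^k), r_s/λ + 2β = O(b^k), β̃_s − P₂(b,β̃) = O(b^k), γ_s = 1 + β² + O(b^k) (with ds/dt = 1/λ²). Then there exists a universal time t̲ < t̄, independent of t̄, such that on [t̲, t̄]: b(t) = (1/(1+α))·(2(1+α)β∞/(α g∞))^{2/(1+α)}·|t|^{(1−α)/(1+α)}·(1 + O(log(|t|)·|t|^{(1−α)/(1+α)})), λ(t) = (2(1+α)β∞/(α g∞))^{1/(1+α)}·|t|^{1/(1+α)}·(1 + O(log(|t|)·|t|^{(1−α)/(1+α)})),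 r(t) = g∞·(2(1+α)β∞/(α g∞))^{α/(1+α)}·|t|^{α/(1+α)}·(1 + O(log(|t|)·|t|^{(1−α)/(1+α)})), β̃(t) = O(|t|^{2(1−α)/(1+α)}), and γ(t) = (1+β∞²)·((1−α)/(1+α))^{(1−α)/(1+α)}·(2(1−α)β∞/(α g∞))^{−2/(1+α)}·|t|^{−(1−α)/(1+α)} + O(log(|t|)). -/

import Mathlib

open Set

open Filter Topology

/-!
In the coordinates `(log λ, (log r) / α, β̃ / ε)` with the supremum norm and a small weight `ε`,
the equations linearised around the reference solution move nearby trajectories apart at a rate of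
at most about `2 / ((1 + α) |t|)`, because `b / λ ^ 2` is asymptotic to `1 / ((1 + α) |t|)` by the
blow-up laws; the terms of degree at least three contribute less. The errors `O(b ^ k)` act on
these coordinates with size `O(|t| ^ (κ - 1))`, where `κ = (1 - α) / (1 + α) * (k - 1)`. The
hypothesis `k > 2 / (1 - α) + 1` says exactly that `κ > 2 / (1 + α)`, so the barrier `m |t| ^ κ`
grows backward in time faster than the linearised flow, and for large `m` it absorbs the errors
too. Two solutions which agree at `t̄` therefore stay within `m |t| ^ κ` of each other on an
interval whose length does not depend on `t̄`, and since `κ` exceeds the exponents of the error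
terms, the laws of the one carry over to the other. The phase difference is the integral of a
quantity of size `O(|t| ^ (κ - 1 - (1 - α) / (1 + α)))`, hence bounded.
-/

section Analysis

lemma norm_le_mul_neg_rpow {E : Type*} [NormedAddCommGroup E] [NormedSpace ℝ E] {f f' : ℝ → E}
    {T t₁ m κ : ℝ} (ht₁ : t₁ < 0) (hf : ∀ t ∈ Icc T t₁, HasDerivAt f (f' t) t)
    (hend : ‖f t₁‖ ≤ m * (-t₁) ^ κ)
    (hbound : ∀ t ∈ Icc T t₁, ‖f t‖ = m * (-t) ^ κ → ‖f' t‖ < κ * m * (-t) ^ (κ - 1))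
    {t : ℝ} (ht : t ∈ Icc T t₁) : ‖f t‖ ≤ m * (-t) ^ κ := by
  have hmem : ∀ τ ∈ Icc (-t₁) (-T), -τ ∈ Icc T t₁ := fun τ hτ =>
    ⟨by linarith [hτ.2], by linarith [hτ.1]⟩
  have hderiv : ∀ τ ∈ Icc (-t₁) (-T), HasDerivAt (fun τ => f (-τ)) (-f' (-τ)) τ := fun τ hτ => by
    simpa [Function.comp_def] using (hf (-τ) (hmem τ hτ)).scomp τ (hasDerivAt_neg τ)
  have hbarrier : ∀ τ ∈ Icc (-t₁) (-T),
      HasDerivAt (fun τ => m * τ ^ κ) (κ * m * τ ^ (κ - 1)) τ := fun τ hτ => by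
    have hτ0 : τ ≠ 0 := by linarith [hτ.1]
    simpa only [mul_left_comm m, mul_assoc] using
      (Real.hasDerivAt_rpow_const (p := κ) (Or.inl hτ0)).const_mul m
  have key := image_norm_le_of_norm_deriv_right_lt_deriv_boundary'
    (fun τ hτ => (hderiv τ hτ).continuousAt.continuousWithinAt)
    (fun τ hτ => (hderiv τ (Ico_subset_Icc_self hτ)).hasDerivWithinAt)
    (by simpa using hend)
    (fun τ hτ => (hbarrier τ hτ).continuousAt.continuousWithinAt)
    (fun τ hτ => (hbarrier τ (Ico_subset_Icc_self hτ)).hasDerivWithinAt)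
    (fun τ hτ h => by
      simpa using hbound (-τ) (hmem τ (Ico_subset_Icc_self hτ)) (by simpa using h))
    (x := -t) ⟨by linarith [ht.2], by linarith [ht.1]⟩
  simpa using key

lemma abs_sub_le_of_abs_log_sub_log_le {x y N η : ℝ} (hx : 0 < x) (hy : 0 < y)
    (hlog : |Real.log x - Real.log y| ≤ N) (hN : N ≤ η) (hη : η ≤ 1) :
    |x - y| ≤ (1 + η) * N * y := by
  set u : ℝ := Real.log x - Real.log y with hu
  have hxy : x - y = (Real.exp u - 1) * y := by
    rw [hu, Real.exp_sub, Real.exp_log hx, Real.exp_log hy]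
    field_simp
  have hexp : |Real.exp u - 1| ≤ (1 + η) * N := by
    have h := Real.abs_exp_sub_one_sub_id_le (hlog.trans (hN.trans hη))
    have htri : |Real.exp u - 1| ≤ |Real.exp u - 1 - u| + |u| := by
      simpa using abs_add_le (Real.exp u - 1 - u) u
    have hsq : u ^ 2 ≤ η * N := by
      rw [← sq_abs, sq]
      exact mul_le_mul (hlog.trans hN) hlog (abs_nonneg u) ((abs_nonneg u).trans (hlog.trans hN))
    linarith
  rw [hxy, abs_mul, abs_of_pos hy]
  gcongr

lemma abs_log_sub_log_le {m x y : ℝ} (hm : 0 < m) (hx : m ≤ x) (hy : m ≤ y) :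
    |Real.log x - Real.log y| ≤ 1 / m * |x - y| := by
  wlog hxy : y ≤ x generalizing x y
  · rw [abs_sub_comm, abs_sub_comm x]
    exact this hy hx (le_of_not_ge hxy)
  have hy0 : 0 < y := hm.trans_le hy
  rw [← Real.log_div (by linarith) hy0.ne', abs_of_nonneg (sub_nonneg.2 hxy),
    abs_of_nonneg (Real.log_nonneg ((one_le_div hy0).2 hxy))]
  calc Real.log (x / y) ≤ x / y - 1 := Real.log_le_sub_one_of_pos (div_pos (hy0.trans_le hxy) hy0)
    _ = 1 / y * (x - y) := by field_simp
    _ ≤ 1 / m * (x - y) := by gcongr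

lemma div_rpow_mul_rpow {a κ τ : ℝ} (hτ : 0 < τ) :
    1 / (τ ^ a * τ) * τ ^ κ = τ ^ (κ - a - 1) := by
  rw [Real.rpow_sub_one hτ.ne', Real.rpow_sub hτ]
  field_simp

lemma abs_sub_le_of_abs_sub_le_mul {y z v E N : ℝ} (hy : |y - z| ≤ N * z) (hz : |z - v| ≤ E)
    (hN : 0 ≤ N) (hN1 : N ≤ 1) : |y - v| ≤ N * v + 2 * E := by
  have hNz : N * z ≤ N * v + E := by
    have := mul_le_mul_of_nonneg_left ((le_abs_self _).trans hz) hN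
    nlinarith [(abs_nonneg _).trans hz]
  linarith [abs_sub_le y z v]

lemma abs_sub_mul_rpow_le {y z L C C' p a n N τ : ℝ} (hy : |y - z| ≤ N * z)
    (hz : |z - L * τ ^ p| ≤ C * τ ^ p * |Real.log τ| * τ ^ a) (hN : 0 ≤ N) (hN1 : N ≤ 1)
    (hNn : N ≤ n * τ ^ a) (hL : 0 ≤ L) (hτ : 0 ≤ τ) (hlog : 1 ≤ |Real.log τ|)
    (hC' : n * L + 2 * C ≤ C') :
    |y - L * τ ^ p| ≤ C' * τ ^ p * |Real.log τ| * τ ^ a := by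
  have hp := Real.rpow_nonneg hτ p
  have := Real.rpow_nonneg hτ a
  calc |y - L * τ ^ p| ≤ N * (L * τ ^ p) + 2 * (C * τ ^ p * |Real.log τ| * τ ^ a) :=
        abs_sub_le_of_abs_sub_le_mul hy hz hN hN1
    _ ≤ n * τ ^ a * (L * τ ^ p) * |Real.log τ| + 2 * (C * τ ^ p * |Real.log τ| * τ ^ a) := by
        have hv : 0 ≤ L * τ ^ p := mul_nonneg hL hp
        exact add_le_add ((mul_le_mul_of_nonneg_right hNn hv).trans
          (le_mul_of_one_le_right (mul_nonneg (hN.trans hNn) hv) hlog)) le_rfl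
    _ = (n * L + 2 * C) * τ ^ p * |Real.log τ| * τ ^ a := by ring
    _ ≤ C' * τ ^ p * |Real.log τ| * τ ^ a := by gcongr

lemma tendsto_rpow_nhdsGT_zero {p : ℝ} (hp : 0 < p) :
    Tendsto (fun τ : ℝ => τ ^ p) (𝓝[>] 0) (𝓝 0) := by
  have h := (Real.continuousAt_rpow_const 0 p (Or.inr hp.le)).tendsto
  rw [Real.zero_rpow hp.ne'] at h
  exact h.mono_left nhdsWithin_le_nhds

lemma tendsto_div_rpow_of_abs_sub_le {f : ℝ → ℝ} {L p a C : ℝ} (ha : 0 < a)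
    (hf : ∀ᶠ τ in 𝓝[>] 0, |f τ - L * τ ^ p| ≤ C * τ ^ p * |Real.log τ| * τ ^ a) :
    Tendsto (fun τ => f τ / τ ^ p) (𝓝[>] 0) (𝓝 L) := by
  have herr : Tendsto (fun τ : ℝ => C * |Real.log τ * τ ^ a|) (𝓝[>] 0) (𝓝 0) := by
    simpa using (tendsto_log_mul_rpow_nhdsGT_zero ha).abs.const_mul C
  rw [tendsto_iff_norm_sub_tendsto_zero]
  refine squeeze_zero' (Eventually.of_forall fun _ => norm_nonneg _) ?_ herr
  filter_upwards [hf, self_mem_nhdsWithin] with τ hτ hτ0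
  have hp : 0 < τ ^ p := Real.rpow_pos_of_pos hτ0 p
  have ha' : 0 < τ ^ a := Real.rpow_pos_of_pos hτ0 a
  rw [Real.norm_eq_abs, div_sub' hp.ne', abs_div, abs_of_pos hp, div_le_iff₀ hp, abs_mul,
    abs_of_pos ha', mul_comm _ L]
  linarith

lemma eventually_forall_Ioc_nhdsGT_zero {p : ℝ → Prop} (hp : ∀ᶠ τ in 𝓝[>] (0 : ℝ), p τ) :
    ∀ᶠ τ₀ in 𝓝[>] (0 : ℝ), ∀ τ ∈ Ioc 0 τ₀, p τ := by
  obtain ⟨δ, hδ, hsub⟩ := mem_nhdsGT_iff_exists_Ioc_subset.1 hp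
  filter_upwards [Ioc_mem_nhdsGT hδ] with τ₀ hτ₀ τ hτ
  exact hsub ⟨hτ.1, hτ.2.trans hτ₀.2⟩

lemma eventually_one_le_abs_log_nhdsGT_zero : ∀ᶠ τ in 𝓝[>] (0 : ℝ), 1 ≤ |Real.log τ| :=
  (tendsto_abs_atBot_atTop.comp Real.tendsto_log_nhdsGT_zero).eventually_ge_atTop 1

end Analysis

section ThirdOrder

/-- `Q` vanishes to third order at the origin, in Lipschitz form: on the square of half-width
`x ≤ 1` it is Lipschitz with constant `O(x ^ 2)`. Polynomials without terms of degree less than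
three have this property. -/
def VanishesToThirdOrder (Q : ℝ → ℝ → ℝ) : Prop :=
  Q 0 0 = 0 ∧ ∃ D, 0 ≤ D ∧ ∀ x u v u' v', x ≤ 1 → |u| ≤ x → |v| ≤ x → |u'| ≤ x → |v'| ≤ x →
    |Q u v - Q u' v'| ≤ D * x ^ 2 * (|u - u'| + |v - v'|)

namespace VanishesToThirdOrder

lemma zero : VanishesToThirdOrder fun _ _ => 0 :=
  ⟨rfl, 0, le_rfl, fun _ _ _ _ _ _ _ _ _ _ => by simp⟩

lemma const_mul {Q : ℝ → ℝ → ℝ} (hQ : VanishesToThirdOrder Q) (c : ℝ) :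
    VanishesToThirdOrder fun u v => c * Q u v := by
  obtain ⟨h0, D, hD, h⟩ := hQ
  refine ⟨by simp [h0], |c| * D, by positivity, fun x u v u' v' hx hu hv hu' hv' => ?_⟩
  rw [← mul_sub, abs_mul, mul_assoc |c|, mul_assoc |c|]
  gcongr
  exact h x u v u' v' hx hu hv hu' hv'

lemma add {Q R : ℝ → ℝ → ℝ} (hQ : VanishesToThirdOrder Q) (hR : VanishesToThirdOrder R) :
    VanishesToThirdOrder fun u v => Q u v + R u v := by
  obtain ⟨hQ0, D, hD, hQ⟩ := hQ
  obtain ⟨hR0, D', hD', hR⟩ := hR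
  refine ⟨by simp [hQ0, hR0], D + D', by positivity, fun x u v u' v' hx hu hv hu' hv' => ?_⟩
  rw [add_sub_add_comm, add_mul, add_mul]
  exact (abs_add_le _ _).trans
    (add_le_add (hQ x u v u' v' hx hu hv hu' hv') (hR x u v u' v' hx hu hv hu' hv'))

lemma sum {ι : Type*} (s : Finset ι) {Q : ι → ℝ → ℝ → ℝ}
    (hQ : ∀ i ∈ s, VanishesToThirdOrder (Q i)) :
    VanishesToThirdOrder fun u v => ∑ i ∈ s, Q i u v := by
  classical
  induction s using Finset.induction_on with
  | empty => simpa using zero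
  | insert i s hi ih =>
    simp only [Finset.sum_insert hi]
    exact (hQ i (Finset.mem_insert_self i s)).add
      (ih fun j hj => hQ j (Finset.mem_insert_of_mem hj))

lemma monomial {j l : ℕ} (hjl : 3 ≤ j + l) : VanishesToThirdOrder fun u v => u ^ j * v ^ l := by
  refine ⟨?_, j + l, by positivity, fun x u v u' v' hx hu hv hu' hv' => ?_⟩
  · rcases Nat.eq_zero_or_pos j with rfl | hj
    · simp [show l ≠ 0 by omega]
    · simp [hj.ne']
  have hx0 : 0 ≤ x := (abs_nonneg u).trans hu
  have hpow : ∀ {y y' : ℝ} (n : ℕ), |y| ≤ x → |y'| ≤ x →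
      |y ^ n - y' ^ n| ≤ n * x ^ (n - 1) * |y - y'| := fun {y y'} n hy hy' =>
    calc |y ^ n - y' ^ n| ≤ |y - y'| * n * max |y| |y'| ^ (n - 1) := abs_pow_sub_pow_le y y' n
      _ ≤ |y - y'| * n * x ^ (n - 1) := by gcongr; exact max_le hy hy'
      _ = n * x ^ (n - 1) * |y - y'| := by ring
  have hdeg : ∀ n m : ℕ, 3 ≤ n + m → n * x ^ (n - 1) * x ^ m ≤ n * x ^ 2 := fun n m hnm => by
    rcases Nat.eq_zero_or_pos n with rfl | hn
    · simp
    rw [mul_assoc, ← pow_add]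
    exact mul_le_mul_of_nonneg_left (pow_le_pow_of_le_one hx0 hx (by omega)) n.cast_nonneg
  calc |u ^ j * v ^ l - u' ^ j * v' ^ l|
      = |(u ^ j - u' ^ j) * v ^ l + u' ^ j * (v ^ l - v' ^ l)| := by ring_nf
    _ ≤ |u ^ j - u' ^ j| * |v| ^ l + |u'| ^ j * |v ^ l - v' ^ l| := by
        rw [← abs_pow, ← abs_pow, ← abs_mul, ← abs_mul]
        exact abs_add_le _ _
    _ ≤ j * x ^ (j - 1) * |u - u'| * x ^ l + x ^ j * (l * x ^ (l - 1) * |v - v'|) := by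
        gcongr
        exacts [hpow j hu hu', hpow l hv hv']
    _ = j * x ^ (j - 1) * x ^ l * |u - u'| + l * x ^ (l - 1) * x ^ j * |v - v'| := by ring
    _ ≤ j * x ^ 2 * |u - u'| + l * x ^ 2 * |v - v'| :=
        add_le_add (mul_le_mul_of_nonneg_right (hdeg j l hjl) (abs_nonneg _))
          (mul_le_mul_of_nonneg_right (hdeg l j (by omega)) (abs_nonneg _))
    _ ≤ (j + l) * x ^ 2 * |u - u'| + (j + l) * x ^ 2 * |v - v'| := by gcongr <;> simp
    _ = (j + l) * x ^ 2 * (|u - u'| + |v - v'|) := by ring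

lemma sum_monomial (k : ℕ) (c : ℕ → ℕ → ℝ) : VanishesToThirdOrder fun u v =>
    ∑ j ∈ Finset.range k, ∑ l ∈ Finset.range k,
      if 3 ≤ j + l ∧ j + l ≤ k - 1 then c j l * u ^ j * v ^ l else 0 :=
  sum _ fun j _ => sum _ fun l _ => by
    split_ifs with h
    · simpa only [mul_assoc] using (monomial h.1).const_mul (c j l)
    · exact zero

end VanishesToThirdOrder

end ThirdOrder

/-- A state `(λ, r, β̃, γ)` of the modulation system, with `w` for `β̃`; the parameter `b` is not
recorded, being determined by the constraint. Velocities of states have the same type. -/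
structure ModState where
  lam : ℝ
  r : ℝ
  w : ℝ
  γ : ℝ

/-- The data of a modulation system: the exponent `α`, the limit `β` of `β∞ + β̃`, and the
nonlinearities `P₁`, `P₂`, of which only the vanishing order at the origin is retained. -/
structure ModulationSystem where
  α : ℝ
  β : ℝ
  P₁ : ℝ → ℝ → ℝ
  P₂ : ℝ → ℝ → ℝ
  α_pos : 0 < α
  α_lt_one : α < 1
  β_pos : 0 < β
  vanishes₁ : VanishesToThirdOrder P₁
  vanishes₂ : VanishesToThirdOrder fun b w => P₂ b w + 2 * b * w

namespace ModulationSystem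

variable (S : ModulationSystem)

/-- The parameter `b`, as determined by the constraint. -/
noncomputable def b (x : ModState) : ℝ :=
  2 * (S.β + x.w) / S.α * (x.lam / x.r)

/-- The vector field of the exact modulation system, in the original time `t`. -/
noncomputable def velocity (x : ModState) : ModState where
  lam := (S.P₁ (S.b x) x.w - S.b x) / x.lam
  r := -2 * (S.β + x.w) / x.lam
  w := S.P₂ (S.b x) x.w / x.lam ^ 2
  γ := (1 + (S.β + x.w) ^ 2) / x.lam ^ 2

/-- The velocity `x'` satisfies the modulation equations at `x` up to errors of size `E`, the
errors being measured in the rescaled time `s`. -/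
structure IsApproxVelocity (E : ℝ) (x x' : ModState) : Prop where
  lam : |x.lam * x'.lam + S.b x - S.P₁ (S.b x) x.w| ≤ E
  r : |x.lam * x'.r + 2 * (S.β + x.w)| ≤ E
  w : |x.lam ^ 2 * x'.w - S.P₂ (S.b x) x.w| ≤ E
  γ : |x.lam ^ 2 * x'.γ - (1 + (S.β + x.w) ^ 2)| ≤ E

/-- `X` is a trajectory with velocity `X'` on `I` which solves the modulation system up to errors
`C * |b| ^ k`. -/
structure IsApproxSolution (C : ℝ) (k : ℕ) (I : Set ℝ) (X X' : ℝ → ModState) : Prop where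
  lam_pos : ∀ t ∈ I, 0 < (X t).lam
  r_pos : ∀ t ∈ I, 0 < (X t).r
  hasDerivAt_lam : ∀ t ∈ I, HasDerivAt (fun t => (X t).lam) (X' t).lam t
  hasDerivAt_r : ∀ t ∈ I, HasDerivAt (fun t => (X t).r) (X' t).r t
  hasDerivAt_w : ∀ t ∈ I, HasDerivAt (fun t => (X t).w) (X' t).w t
  hasDerivAt_γ : ∀ t ∈ I, HasDerivAt (fun t => (X t).γ) (X' t).γ t
  isApproxVelocity : ∀ t ∈ I, S.IsApproxVelocity (C * |S.b (X t)| ^ k) (X t) (X' t)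

/-- The scale of the coordinate `w / weight`. It is small against `η` and `β`, so that a
perturbation of `w` moves `log (β + w)` by less than `η` times its size in the coordinate. -/
noncomputable def weight (η : ℝ) : ℝ :=
  η * S.β / (S.β + 2)

/-- Coordinates in which the linearised modulation equations become diagonal, up to small terms.
They carry the supremum norm. -/
noncomputable def coord (η : ℝ) (x : ModState) : ℝ × ℝ × ℝ :=
  (Real.log x.lam, Real.log x.r / S.α, x.w / S.weight η)

/-- The velocity in the coordinates `coord` of a state `x` moving with velocity `x'`. -/
noncomputable def coordVelocity (η : ℝ) (x x' : ModState) : ℝ × ℝ × ℝ :=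
  (x'.lam / x.lam, x'.r / x.r / S.α, x'.w / S.weight η)

/-- `x` lies in the blow-up regime at backward time `τ`, where `s` is the size of `b`. -/
structure IsSmall (K s τ : ℝ) (x : ModState) : Prop where
  s_pos : 0 < s
  τ_pos : 0 < τ
  lam_pos : 0 < x.lam
  r_pos : 0 < x.r
  abs_b_le : |S.b x| ≤ K * s
  abs_w_le : |x.w| ≤ K * s
  one_div_sq_le : 1 / x.lam ^ 2 ≤ K / (s * τ)

/-- A state `x` around which the modulation equations can be linearised at backward time `τ`: the
size `s` of `b` is small against `η`, and `b / λ ^ 2` is at most about `1 / ((1 + α) * τ)`, its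
value in the blow-up law. -/
structure IsReference (η K s τ : ℝ) (x : ModState) : Prop extends S.IsSmall K s τ x where
  η_pos : 0 < η
  η_le_eighth : η ≤ 1 / 8
  η_le_half : η ≤ S.β / 2
  small : 3 * (K * s) ≤ η
  b_div_sq_le : S.b x / x.lam ^ 2 ≤ (1 + η) / ((1 + S.α) * τ)

/-- `p` is at distance at most `N` of the reference state `q`, in the coordinates `coord`. -/
structure IsNear (η K s τ N : ℝ) (p q : ModState) : Prop where
  isReference : S.IsReference η K s τ q
  lam_pos : 0 < p.lam
  r_pos : 0 < p.r
  norm_le : ‖S.coord η p - S.coord η q‖ ≤ N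
  N_le : N ≤ K * s

variable {S} {C C₀ C₁ E M η κ K g m s τ N : ℝ} {k : ℕ} {I : Set ℝ}
  {x x' p p' q q' : ModState} {X X' : ℝ → ModState}

lemma weight_pos (hη : 0 < η) : 0 < S.weight η := by
  have := S.β_pos
  unfold weight
  positivity

lemma weight_le (hη : 0 ≤ η) : S.weight η ≤ η := by
  have := S.β_pos
  unfold weight
  rw [div_le_iff₀ (by positivity)]
  nlinarith

lemma two_mul_weight_le (hη : 0 ≤ η) : 2 * S.weight η ≤ η * S.β := by
  have := S.β_pos
  unfold weight
  rw [← mul_div_assoc, div_le_iff₀ (by positivity)]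
  nlinarith [mul_nonneg hη this.le, mul_nonneg (mul_nonneg hη this.le) this.le]

lemma IsApproxVelocity.mono {E' : ℝ} (h : S.IsApproxVelocity E x x') (hE : E ≤ E') :
    S.IsApproxVelocity E' x x' :=
  ⟨h.lam.trans hE, h.r.trans hE, h.w.trans hE, h.γ.trans hE⟩

lemma isApproxVelocity_of_b_eq {B : ℝ} (hb : S.b x = B) (hC : 0 ≤ C)
    (hlam : |x.lam * x'.lam + B - S.P₁ B x.w| ≤ C * B ^ k)
    (hr : |x.lam * x'.r + 2 * (S.β + x.w)| ≤ C * B ^ k)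
    (hw : |x.lam ^ 2 * x'.w - S.P₂ B x.w| ≤ C * B ^ k)
    (hγ : |x.lam ^ 2 * x'.γ - (1 + (S.β + x.w) ^ 2)| ≤ C * B ^ k) :
    S.IsApproxVelocity (C * |S.b x| ^ k) x x' := by
  subst hb
  refine IsApproxVelocity.mono ⟨hlam, hr, hw, hγ⟩ (mul_le_mul_of_nonneg_left ?_ hC)
  exact (le_abs_self _).trans_eq (abs_pow _ _)

lemma isApproxVelocity_velocity (hlam : x.lam ≠ 0) :
    S.IsApproxVelocity 0 x (S.velocity x) := by
  constructor <;> rw [abs_nonpos_iff] <;> simp only [velocity] <;> field_simp <;> ring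

lemma isApproxSolution_velocity (hC : 0 ≤ C) (hlam : ∀ t ∈ I, 0 < (X t).lam)
    (hr : ∀ t ∈ I, 0 < (X t).r)
    (hlam' : ∀ t ∈ I, HasDerivAt (fun t => (X t).lam) (S.velocity (X t)).lam t)
    (hr' : ∀ t ∈ I, HasDerivAt (fun t => (X t).r) (S.velocity (X t)).r t)
    (hw' : ∀ t ∈ I, HasDerivAt (fun t => (X t).w) (S.velocity (X t)).w t)
    (hγ' : ∀ t ∈ I, HasDerivAt (fun t => (X t).γ) (S.velocity (X t)).γ t) :
    S.IsApproxSolution C k I X fun t => S.velocity (X t) :=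
  ⟨hlam, hr, hlam', hr', hw', hγ', fun t ht =>
    (isApproxVelocity_velocity (hlam t ht).ne').mono (by positivity)⟩

lemma IsApproxSolution.hasDerivAt_coord (h : S.IsApproxSolution C k I X X') (η : ℝ) {t : ℝ}
    (ht : t ∈ I) :
    HasDerivAt (fun t => S.coord η (X t)) (S.coordVelocity η (X t) (X' t)) t :=
  ((h.hasDerivAt_lam t ht).log (h.lam_pos t ht).ne').prodMk
    ((((h.hasDerivAt_r t ht).log (h.r_pos t ht).ne').div_const _).prodMk
      ((h.hasDerivAt_w t ht).div_const _))

lemma coordVelocity_velocity (hlam : x.lam ≠ 0) :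
    S.coordVelocity η x (S.velocity x) = ((S.P₁ (S.b x) x.w - S.b x) / x.lam ^ 2,
      -(S.b x / x.lam ^ 2), S.P₂ (S.b x) x.w / x.lam ^ 2 / S.weight η) := by
  have := S.α_pos.ne'
  simp only [coordVelocity, velocity, Prod.mk.injEq, and_true]
  constructor
  · field_simp
  · rw [b]
    field_simp

lemma half_le_add_of_abs_le {β w : ℝ} (hw : |w| ≤ β / 2) : β / 2 ≤ β + w := by
  linarith [neg_abs_le w]

lemma b_pos (hlam : 0 < x.lam) (hr : 0 < x.r) (hw : |x.w| ≤ S.β / 2) : 0 < S.b x := by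
  have := S.α_pos
  have : 0 < S.β + x.w := (half_pos S.β_pos).trans_le (half_le_add_of_abs_le hw)
  unfold b
  positivity

lemma log_b (hlam : 0 < x.lam) (hr : 0 < x.r) (hw : |x.w| ≤ S.β / 2) :
    Real.log (S.b x) = Real.log (2 / S.α) + Real.log (S.β + x.w) + Real.log x.lam
      - Real.log x.r := by
  have := S.α_pos
  have : 0 < S.β + x.w := (half_pos S.β_pos).trans_le (half_le_add_of_abs_le hw)
  rw [b, mul_div_right_comm, Real.log_mul (by positivity) (by positivity),
    Real.log_mul (by positivity) (by positivity), Real.log_div hlam.ne' hr.ne']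
  ring

lemma coordVelocity_sub_velocity (hlam : x.lam ≠ 0) (hr : x.r ≠ 0) (hβw : S.β + x.w ≠ 0) :
    S.coordVelocity η x x' - S.coordVelocity η x (S.velocity x)
      = ((x.lam * x'.lam + S.b x - S.P₁ (S.b x) x.w) / x.lam ^ 2,
        (x.lam * x'.r + 2 * (S.β + x.w)) * (S.b x / (2 * (S.β + x.w))) / x.lam ^ 2,
        (x.lam ^ 2 * x'.w - S.P₂ (S.b x) x.w) / x.lam ^ 2 / S.weight η) := by
  have := S.α_pos.ne'
  rw [coordVelocity_velocity hlam]
  simp only [coordVelocity, Prod.mk_sub_mk, Prod.mk.injEq]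
  refine ⟨?_, ?_, ?_⟩
  · field_simp
    ring
  · rw [b]
    field_simp
    ring
  · field_simp

lemma norm_coordVelocity_sub_velocity_le (hη : 0 < η) (hη1 : η ≤ 1) (hlam : x.lam ≠ 0)
    (hr : x.r ≠ 0) (hb : |S.b x| ≤ 1) (hw : |x.w| ≤ S.β / 2) (hx' : S.IsApproxVelocity E x x') :
    ‖S.coordVelocity η x x' - S.coordVelocity η x (S.velocity x)‖
      ≤ E / x.lam ^ 2 / S.weight η := by
  have hβ := S.β_pos
  have hε : 0 < S.weight η := weight_pos hη
  have hε1 : S.weight η ≤ 1 := (weight_le hη.le).trans hη1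
  have hεβ : S.weight η ≤ S.β := by nlinarith [two_mul_weight_le (S := S) hη.le]
  have hβw := half_le_add_of_abs_le hw
  have hβw0 : 0 < S.β + x.w := (half_pos hβ).trans_le hβw
  have hE : 0 ≤ E := (abs_nonneg _).trans hx'.lam
  have hElam : 0 ≤ E / x.lam ^ 2 := by positivity
  rw [coordVelocity_sub_velocity hlam hr hβw0.ne']
  refine norm_prod_le_iff.2 ⟨?_, norm_prod_le_iff.2 ⟨?_, ?_⟩⟩
  · rw [Real.norm_eq_abs, abs_div, abs_sq]
    calc _ ≤ E / x.lam ^ 2 := by gcongr; exact hx'.lam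
      _ ≤ E / x.lam ^ 2 / S.weight η := le_div_self hElam hε hε1
  · rw [Real.norm_eq_abs, abs_div, abs_sq, abs_mul, abs_div, abs_of_pos (mul_pos two_pos hβw0)]
    have hratio : |S.b x| / (2 * (S.β + x.w)) ≤ 1 / S.weight η := by
      gcongr
      linarith
    calc _ ≤ E * (1 / S.weight η) / x.lam ^ 2 := by gcongr; exact hx'.r
      _ = E / x.lam ^ 2 / S.weight η := by ring
  · rw [Real.norm_eq_abs, abs_div, abs_div, abs_sq, abs_of_pos hε]
    gcongr
    exact hx'.w

lemma IsSmall.K_pos (h : S.IsSmall K s τ x) : 0 < K := by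
  have hs := h.s_pos
  have hτ := h.τ_pos
  have hlam := h.lam_pos
  have hpos : 0 < K / (s * τ) := lt_of_lt_of_le (by positivity) h.one_div_sq_le
  exact (div_pos_iff_of_pos_right (by positivity)).1 hpos

lemma IsReference.abs_w_le_half (h : S.IsReference η K s τ x) : |x.w| ≤ S.β / 2 := by
  have := mul_pos h.K_pos h.s_pos
  linarith [h.abs_w_le, h.small, h.η_le_half]

lemma IsReference.b_pos (h : S.IsReference η K s τ x) : 0 < S.b x :=
  ModulationSystem.b_pos h.lam_pos h.r_pos h.abs_w_le_half

namespace IsNear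

lemma N_nonneg (h : S.IsNear η K s τ N p q) : 0 ≤ N :=
  (norm_nonneg _).trans h.norm_le

lemma three_mul_N_le (h : S.IsNear η K s τ N p q) : 3 * N ≤ η := by
  linarith [h.N_le, h.isReference.small]

lemma abs_log_lam_sub_le (h : S.IsNear η K s τ N p q) :
    |Real.log p.lam - Real.log q.lam| ≤ N :=
  (norm_prod_le_iff.1 h.norm_le).1

lemma abs_log_r_sub_le (h : S.IsNear η K s τ N p q) :
    |Real.log p.r - Real.log q.r| ≤ S.α * N := by
  have hα := S.α_pos
  have hr : |Real.log p.r / S.α - Real.log q.r / S.α| ≤ N :=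
    (norm_prod_le_iff.1 (norm_prod_le_iff.1 h.norm_le).2).1
  rwa [← sub_div, abs_div, abs_of_pos hα, div_le_iff₀' hα] at hr

lemma abs_w_sub_le (h : S.IsNear η K s τ N p q) : |p.w - q.w| ≤ S.weight η * N := by
  have hε : 0 < S.weight η := weight_pos h.isReference.η_pos
  have hw : |p.w / S.weight η - q.w / S.weight η| ≤ N :=
    (norm_prod_le_iff.1 (norm_prod_le_iff.1 h.norm_le).2).2
  rwa [← sub_div, abs_div, abs_of_pos hε, div_le_iff₀' hε] at hw

lemma abs_w_sub_le_N (h : S.IsNear η K s τ N p q) : |p.w - q.w| ≤ N := by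
  have hε : S.weight η ≤ 1 := by
    linarith [weight_le (S := S) h.isReference.η_pos.le, h.isReference.η_le_eighth]
  exact h.abs_w_sub_le.trans (mul_le_of_le_one_left h.N_nonneg hε)

lemma abs_w_le (h : S.IsNear η K s τ N p q) : |p.w| ≤ 2 * K * s := by
  have htri : |p.w| ≤ |p.w - q.w| + |q.w| := by simpa using abs_add_le (p.w - q.w) q.w
  linarith [h.abs_w_sub_le_N, h.N_le, h.isReference.abs_w_le]

lemma abs_w_le_half (h : S.IsNear η K s τ N p q) : |p.w| ≤ S.β / 2 := by
  have := mul_pos h.isReference.K_pos h.isReference.s_pos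
  linarith [h.abs_w_le, h.isReference.small, h.isReference.η_le_half]

lemma abs_log_add_w_sub_le (h : S.IsNear η K s τ N p q) :
    |Real.log (S.β + p.w) - Real.log (S.β + q.w)| ≤ η * N := by
  have hβ := S.β_pos
  have hN := h.N_nonneg
  calc |Real.log (S.β + p.w) - Real.log (S.β + q.w)|
      ≤ 1 / (S.β / 2) * |S.β + p.w - (S.β + q.w)| :=
        abs_log_sub_log_le (half_pos hβ) (half_le_add_of_abs_le h.abs_w_le_half)
          (half_le_add_of_abs_le h.isReference.abs_w_le_half)
    _ = 2 * |p.w - q.w| / S.β := by rw [add_sub_add_left_eq_sub]; field_simp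
    _ ≤ 2 * (S.weight η * N) / S.β := by gcongr; exact h.abs_w_sub_le
    _ = 2 * S.weight η * N / S.β := by ring
    _ ≤ η * S.β * N / S.β := by
        gcongr ?_ * N / S.β
        exact two_mul_weight_le h.isReference.η_pos.le
    _ = η * N := by field_simp

lemma b_pos (h : S.IsNear η K s τ N p q) : 0 < S.b p :=
  ModulationSystem.b_pos h.lam_pos h.r_pos h.abs_w_le_half

lemma log_b_sub (h : S.IsNear η K s τ N p q) :
    Real.log (S.b p) - Real.log (S.b q) = (Real.log (S.β + p.w) - Real.log (S.β + q.w))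
      + (Real.log p.lam - Real.log q.lam) - (Real.log p.r - Real.log q.r) := by
  rw [log_b h.lam_pos h.r_pos h.abs_w_le_half,
    log_b h.isReference.lam_pos h.isReference.r_pos h.isReference.abs_w_le_half]
  ring

lemma rate_mul_le (h : S.IsNear η K s τ N p q) : (1 + S.α + η) * N ≤ 3 * N := by
  have := S.α_lt_one
  have := h.isReference.η_le_eighth
  have := h.N_nonneg
  gcongr
  linarith

lemma abs_b_sub_le (h : S.IsNear η K s τ N p q) : |S.b p - S.b q| ≤ 4 * N * S.b q := by
  have hlog : |Real.log (S.b p) - Real.log (S.b q)| ≤ 3 * N := by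
    refine le_trans ?_ h.rate_mul_le
    rw [h.log_b_sub, abs_le]
    have h₁ := abs_le.1 h.abs_log_lam_sub_le
    have h₂ := abs_le.1 h.abs_log_r_sub_le
    have h₃ := abs_le.1 h.abs_log_add_w_sub_le
    constructor <;> linarith
  have hη := h.isReference.η_le_eighth
  have hN := h.N_nonneg
  calc |S.b p - S.b q| ≤ (1 + η) * (3 * N) * S.b q :=
        abs_sub_le_of_abs_log_sub_log_le h.b_pos h.isReference.b_pos hlog h.three_mul_N_le
          (by linarith)
    _ ≤ 4 * N * S.b q := by
        gcongr ?_ * S.b q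
        · exact h.isReference.b_pos.le
        · nlinarith

lemma abs_lam_sub_le (h : S.IsNear η K s τ N p q) : |p.lam - q.lam| ≤ 4 * N * q.lam := by
  have hη := h.isReference.η_le_eighth
  have hN := h.N_nonneg
  have hlam := h.isReference.lam_pos
  calc |p.lam - q.lam| ≤ (1 + η) * N * q.lam :=
        abs_sub_le_of_abs_log_sub_log_le h.lam_pos hlam h.abs_log_lam_sub_le
          (by linarith [h.three_mul_N_le]) (by linarith)
    _ ≤ 4 * N * q.lam := by gcongr; linarith

lemma abs_r_sub_le (h : S.IsNear η K s τ N p q) : |p.r - q.r| ≤ 4 * N * q.r := by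
  have hη := h.isReference.η_le_eighth
  have hN := h.N_nonneg
  have hr := h.isReference.r_pos
  have hlog : |Real.log p.r - Real.log q.r| ≤ N :=
    h.abs_log_r_sub_le.trans (mul_le_of_le_one_left hN S.α_lt_one.le)
  calc |p.r - q.r| ≤ (1 + η) * N * q.r :=
        abs_sub_le_of_abs_log_sub_log_le h.r_pos hr hlog (by linarith [h.three_mul_N_le])
          (by linarith)
    _ ≤ 4 * N * q.r := by gcongr; linarith

lemma abs_one_div_sq_sub_le (h : S.IsNear η K s τ N p q) :
    |1 / p.lam ^ 2 - 1 / q.lam ^ 2| ≤ 3 * N * (1 / q.lam ^ 2) := by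
  have hη := h.isReference.η_le_eighth
  have hN := h.N_nonneg
  have hp := h.lam_pos
  have hq := h.isReference.lam_pos
  have hlog : |Real.log (1 / p.lam ^ 2) - Real.log (1 / q.lam ^ 2)| ≤ 2 * N := by
    rw [one_div, one_div, Real.log_inv, Real.log_inv, Real.log_pow, Real.log_pow, abs_le]
    have := abs_le.1 h.abs_log_lam_sub_le
    constructor <;> push_cast <;> linarith
  calc |1 / p.lam ^ 2 - 1 / q.lam ^ 2| ≤ (1 + η) * (2 * N) * (1 / q.lam ^ 2) :=
        abs_sub_le_of_abs_log_sub_log_le (by positivity) (by positivity) hlog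
          (by linarith [h.three_mul_N_le]) (by linarith)
    _ ≤ 3 * N * (1 / q.lam ^ 2) := by
        gcongr ?_ * (1 / q.lam ^ 2)
        nlinarith

-- The rate `1 / τ` comes from the logarithm of `b / λ ^ 2`, which is linear in the first two
-- coordinates with coefficients `-1` and `-α`.
lemma abs_b_div_sq_sub_le (h : S.IsNear η K s τ N p q) :
    |S.b p / p.lam ^ 2 - S.b q / q.lam ^ 2| ≤ (1 + 4 * η) * (N / τ) := by
  have hα := S.α_pos
  have hη := h.isReference.η_le_eighth
  have hη0 := h.isReference.η_pos
  have hN := h.N_nonneg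
  have hp := h.lam_pos
  have hq := h.isReference.lam_pos
  have hbp := h.b_pos
  have hbq := h.isReference.b_pos
  have hτ := h.isReference.τ_pos
  have hlog : |Real.log (S.b p / p.lam ^ 2) - Real.log (S.b q / q.lam ^ 2)|
      ≤ (1 + S.α + η) * N := by
    rw [Real.log_div hbp.ne' (by positivity), Real.log_div hbq.ne' (by positivity),
      Real.log_pow, Real.log_pow, sub_sub_sub_comm, h.log_b_sub, abs_le]
    have h₁ := abs_le.1 h.abs_log_lam_sub_le
    have h₂ := abs_le.1 h.abs_log_r_sub_le
    have h₃ := abs_le.1 h.abs_log_add_w_sub_le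
    constructor <;> push_cast <;> linarith
  have hrate : (1 + S.α + η) / (1 + S.α) ≤ 1 + η := by
    rw [div_le_iff₀ (by linarith)]
    nlinarith
  calc |S.b p / p.lam ^ 2 - S.b q / q.lam ^ 2|
      ≤ (1 + η) * ((1 + S.α + η) * N) * (S.b q / q.lam ^ 2) :=
        abs_sub_le_of_abs_log_sub_log_le (by positivity) (by positivity) hlog
          (h.rate_mul_le.trans h.three_mul_N_le) (by linarith)
    _ ≤ (1 + η) * ((1 + S.α + η) * N) * ((1 + η) / ((1 + S.α) * τ)) := by
        gcongr _ * ?_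
        exact h.isReference.b_div_sq_le
    _ = (1 + η) ^ 2 * ((1 + S.α + η) / (1 + S.α)) * (N / τ) := by field_simp
    _ ≤ (1 + η) ^ 2 * (1 + η) * (N / τ) := by gcongr
    _ ≤ (1 + 4 * η) * (N / τ) := by
        gcongr
        nlinarith [mul_pos hη0 hη0]

lemma abs_b_sub_le_N (h : S.IsNear η K s τ N p q) : |S.b p - S.b q| ≤ N := by
  have hb : S.b q ≤ 1 / 24 := by
    linarith [(le_abs_self _).trans h.isReference.abs_b_le, h.isReference.small,
      h.isReference.η_le_eighth]
  nlinarith [h.abs_b_sub_le, h.N_nonneg]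

lemma isSmall (h : S.IsNear η K s τ N p q) : S.IsSmall (2 * K) s τ p where
  s_pos := h.isReference.s_pos
  τ_pos := h.isReference.τ_pos
  lam_pos := h.lam_pos
  r_pos := h.r_pos
  abs_b_le := by
    have htri : |S.b p| ≤ |S.b p - S.b q| + |S.b q| := by
      simpa using abs_add_le (S.b p - S.b q) (S.b q)
    linarith [h.abs_b_sub_le_N, h.N_le, h.isReference.abs_b_le]
  abs_w_le := h.abs_w_le
  one_div_sq_le := by
    have hlam := h.isReference.lam_pos
    have hN : 3 * N ≤ 1 := by linarith [h.three_mul_N_le, h.isReference.η_le_eighth]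
    have hdiff : |1 / p.lam ^ 2 - 1 / q.lam ^ 2| ≤ 1 / q.lam ^ 2 :=
      h.abs_one_div_sq_sub_le.trans (mul_le_of_le_one_left (by positivity) hN)
    rw [mul_div_assoc]
    linarith [le_of_abs_le hdiff, h.isReference.one_div_sq_le]

lemma abs_div_sq_sub_div_sq_le (h : S.IsNear η K s τ N p q) {A u v : ℝ}
    (huv : |u - v| ≤ A * N) (hv : |v| ≤ A) :
    |u / p.lam ^ 2 - v / q.lam ^ 2| ≤ 5 * A * (K / (s * τ)) * N := by
  have hN := h.N_nonneg
  have hp := h.lam_pos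
  have hA : 0 ≤ A := (abs_nonneg v).trans hv
  calc |u / p.lam ^ 2 - v / q.lam ^ 2|
      = |(u - v) * (1 / p.lam ^ 2) + v * (1 / p.lam ^ 2 - 1 / q.lam ^ 2)| := by ring_nf
    _ ≤ |u - v| * (1 / p.lam ^ 2) + |v| * |1 / p.lam ^ 2 - 1 / q.lam ^ 2| := by
        refine (abs_add_le _ _).trans_eq ?_
        rw [abs_mul, abs_mul, abs_of_pos (show 0 < 1 / p.lam ^ 2 by positivity)]
    _ ≤ A * N * (2 * K / (s * τ)) + A * (3 * N * (K / (s * τ))) := by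
        gcongr ?_ * ?_ + ?_ * ?_
        · exact h.isSmall.one_div_sq_le
        · refine h.abs_one_div_sq_sub_le.trans ?_
          gcongr _ * ?_
          exact h.isReference.one_div_sq_le
    _ = 5 * A * (K / (s * τ)) * N := by ring

lemma abs_lam_rate_sub_le (h : S.IsNear η K s τ N p q) {d : ℝ}
    (hP₁ : |S.P₁ (S.b p) p.w / p.lam ^ 2 - S.P₁ (S.b q) q.w / q.lam ^ 2| ≤ d) :
    |(S.P₁ (S.b p) p.w - S.b p) / p.lam ^ 2 - (S.P₁ (S.b q) q.w - S.b q) / q.lam ^ 2|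
      ≤ (1 + 4 * η) * (N / τ) + d := by
  rw [sub_div, sub_div, sub_sub_sub_comm, add_comm _ d]
  exact (abs_sub _ _).trans (add_le_add hP₁ h.abs_b_div_sq_sub_le)

lemma abs_b_div_sq_mul_w_sub_le (h : S.IsNear η K s τ N p q) :
    |S.b p / p.lam ^ 2 * p.w - S.b q / q.lam ^ 2 * q.w|
      ≤ ((1 + η) / (1 + S.α) * S.weight η + 3 * K * s) * (N / τ) := by
  have hα := S.α_pos
  have hη := h.isReference.η_pos
  have hη8 := h.isReference.η_le_eighth
  have hNτ : 0 ≤ N / τ := div_nonneg h.N_nonneg h.isReference.τ_pos.le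
  have hKs := mul_pos h.isReference.K_pos h.isReference.s_pos
  have hθq : 0 ≤ S.b q / q.lam ^ 2 := div_nonneg h.isReference.b_pos.le (sq_nonneg _)
  calc |S.b p / p.lam ^ 2 * p.w - S.b q / q.lam ^ 2 * q.w|
      = |S.b q / q.lam ^ 2 * (p.w - q.w) + (S.b p / p.lam ^ 2 - S.b q / q.lam ^ 2) * p.w| := by
        ring_nf
    _ ≤ S.b q / q.lam ^ 2 * |p.w - q.w| + |S.b p / p.lam ^ 2 - S.b q / q.lam ^ 2| * |p.w| := by
        refine (abs_add_le _ _).trans_eq ?_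
        rw [abs_mul, abs_mul, abs_of_nonneg hθq]
    _ ≤ (1 + η) / ((1 + S.α) * τ) * (S.weight η * N)
        + (1 + 4 * η) * (N / τ) * (2 * K * s) := by
        gcongr ?_ * ?_ + ?_ * ?_
        exacts [hθq.trans h.isReference.b_div_sq_le, h.isReference.b_div_sq_le, h.abs_w_sub_le,
          h.abs_b_div_sq_sub_le, h.abs_w_le]
    _ = ((1 + η) / (1 + S.α) * S.weight η + (1 + 4 * η) * 2 * K * s) * (N / τ) := by
        field_simp
    _ ≤ ((1 + η) / (1 + S.α) * S.weight η + 3 * K * s) * (N / τ) := by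
        gcongr ?_ * _
        nlinarith

lemma abs_w_rate_sub_le (h : S.IsNear η K s τ N p q) {d : ℝ}
    (hP₂ : |(S.P₂ (S.b p) p.w + 2 * S.b p * p.w) / p.lam ^ 2
      - (S.P₂ (S.b q) q.w + 2 * S.b q * q.w) / q.lam ^ 2| ≤ d) :
    |S.P₂ (S.b p) p.w / p.lam ^ 2 / S.weight η - S.P₂ (S.b q) q.w / q.lam ^ 2 / S.weight η|
      ≤ (2 / (1 + S.α) + 4 * η + 6 * K * s / S.weight η) * (N / τ) + d / S.weight η := by
  have hα := S.α_pos
  have hη := h.isReference.η_pos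
  have hε : 0 < S.weight η := weight_pos hη
  have hNτ : 0 ≤ N / τ := div_nonneg h.N_nonneg h.isReference.τ_pos.le
  have hrate : 2 * ((1 + η) / (1 + S.α)) ≤ 2 / (1 + S.α) + 4 * η := by
    have : η / (1 + S.α) ≤ η := div_le_self hη.le (by linarith)
    rw [add_div, mul_add, mul_one_div]
    linarith
  calc |S.P₂ (S.b p) p.w / p.lam ^ 2 / S.weight η - S.P₂ (S.b q) q.w / q.lam ^ 2 / S.weight η|
      = |(S.P₂ (S.b p) p.w + 2 * S.b p * p.w) / p.lam ^ 2
          - (S.P₂ (S.b q) q.w + 2 * S.b q * q.w) / q.lam ^ 2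
          - 2 * (S.b p / p.lam ^ 2 * p.w - S.b q / q.lam ^ 2 * q.w)| / S.weight η := by
        rw [← sub_div, abs_div, abs_of_pos hε]
        ring_nf
    _ ≤ (d + 2 * (((1 + η) / (1 + S.α) * S.weight η + 3 * K * s) * (N / τ))) / S.weight η := by
        gcongr
        refine (abs_sub _ _).trans (add_le_add hP₂ ?_)
        rw [abs_mul, abs_two]
        gcongr
        exact h.abs_b_div_sq_mul_w_sub_le
    _ = (2 * ((1 + η) / (1 + S.α)) + 6 * K * s / S.weight η) * (N / τ) + d / S.weight η := by
        field_simp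
        ring
    _ ≤ (2 / (1 + S.α) + 4 * η + 6 * K * s / S.weight η) * (N / τ) + d / S.weight η := by
        gcongr

lemma abs_phase_rate_sub_le (h : S.IsNear η K s τ N p q) :
    |(1 + (S.β + p.w) ^ 2) / p.lam ^ 2 - (1 + (S.β + q.w) ^ 2) / q.lam ^ 2|
      ≤ 5 * (1 + (S.β + 1) ^ 2) * (K / (s * τ)) * N := by
  have hβ := S.β_pos
  have hη := h.isReference.η_le_eighth
  have hN := h.N_nonneg
  have hKs := mul_pos h.isReference.K_pos h.isReference.s_pos
  have hp : |p.w| ≤ 1 := by linarith [h.abs_w_le, h.isReference.small]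
  have hq : |q.w| ≤ 1 := by linarith [h.isReference.abs_w_le, h.isReference.small]
  rw [abs_le] at hp hq
  refine h.abs_div_sq_sub_div_sq_le ?_ ?_
  · calc |1 + (S.β + p.w) ^ 2 - (1 + (S.β + q.w) ^ 2)|
        = |2 * S.β + p.w + q.w| * |p.w - q.w| := by rw [← abs_mul]; ring_nf
      _ ≤ (2 * S.β + 2) * N := by
          gcongr
          · rw [abs_le]
            constructor <;> linarith
          · exact h.abs_w_sub_le_N
      _ ≤ (1 + (S.β + 1) ^ 2) * N := by
          gcongr ?_ * N
          nlinarith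
  · have hqβ := half_le_add_of_abs_le h.isReference.abs_w_le_half
    rw [abs_of_nonneg (by positivity)]
    gcongr
    · linarith
    · linarith

end IsNear

lemma exists_forall_abs_thirdOrder_sub_le {Q : ℝ → ℝ → ℝ} (hQ : VanishesToThirdOrder Q)
    (S : ModulationSystem) : ∃ D, 0 ≤ D ∧ ∀ η K s τ N p q, S.IsNear η K s τ N p q →
      |Q (S.b p) p.w / p.lam ^ 2 - Q (S.b q) q.w / q.lam ^ 2| ≤ D * K ^ 3 * s * (N / τ) := by
  obtain ⟨hQ0, D, hD, hQ⟩ := hQ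
  refine ⟨40 * D, by positivity, fun η K s τ N p q h => ?_⟩
  have hs := h.isReference.s_pos
  have hτ := h.isReference.τ_pos
  have hKs : 0 ≤ 2 * K * s := by linarith [mul_pos h.isReference.K_pos hs]
  have hKs1 : 2 * K * s ≤ 1 := by linarith [h.isReference.small, h.isReference.η_le_eighth]
  have hbq : |S.b q| ≤ 2 * K * s := by linarith [h.isReference.abs_b_le]
  have hwq : |q.w| ≤ 2 * K * s := by linarith [h.isReference.abs_w_le]
  have hdiff : |Q (S.b p) p.w - Q (S.b q) q.w| ≤ 8 * D * K ^ 2 * s ^ 2 * N :=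
    calc _ ≤ D * (2 * K * s) ^ 2 * (|S.b p - S.b q| + |p.w - q.w|) :=
          hQ _ _ _ _ _ hKs1 h.isSmall.abs_b_le h.abs_w_le hbq hwq
      _ ≤ D * (2 * K * s) ^ 2 * (N + N) := by
          gcongr
          exacts [h.abs_b_sub_le_N, h.abs_w_sub_le_N]
      _ = 8 * D * K ^ 2 * s ^ 2 * N := by ring
  have hsize : |Q (S.b q) q.w| ≤ 8 * D * K ^ 2 * s ^ 2 :=
    calc |Q (S.b q) q.w| ≤ D * (2 * K * s) ^ 2 * (|S.b q| + |q.w|) := by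
          simpa only [hQ0, sub_zero] using hQ _ (S.b q) q.w 0 0 hKs1 hbq hwq
            (by rwa [abs_zero]) (by rwa [abs_zero])
      _ ≤ D * (2 * K * s) ^ 2 * (1 + 1) := by gcongr <;> linarith
      _ = 8 * D * K ^ 2 * s ^ 2 := by ring
  calc _ ≤ 5 * (8 * D * K ^ 2 * s ^ 2) * (K / (s * τ)) * N :=
        h.abs_div_sq_sub_div_sq_le hdiff hsize
    _ = 40 * D * K ^ 3 * s * (N / τ) := by field_simp; ring

lemma exists_forall_norm_coordVelocity_velocity_sub_le (S : ModulationSystem) {η K : ℝ}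
    (hη : 0 < η) (hK : 0 ≤ K) : ∃ G, ∀ s τ N p q, S.IsNear η K s τ N p q →
      ‖S.coordVelocity η p (S.velocity p) - S.coordVelocity η q (S.velocity q)‖
        ≤ (2 / (1 + S.α) + 4 * η + G * s) * (N / τ) := by
  have hα := S.α_pos
  have hα1 : 1 ≤ 2 / (1 + S.α) := by rw [le_div_iff₀ (by linarith)]; linarith [S.α_lt_one]
  have hε : 0 < S.weight η := weight_pos hη
  obtain ⟨D₁, hD₁, hP₁⟩ := exists_forall_abs_thirdOrder_sub_le S.vanishes₁ S
  obtain ⟨D₂, hD₂, hP₂⟩ := exists_forall_abs_thirdOrder_sub_le S.vanishes₂ S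
  refine ⟨D₁ * K ^ 3 + (6 * K + D₂ * K ^ 3) / S.weight η, fun s τ N p q h => ?_⟩
  have hs := h.isReference.s_pos
  have hNτ : 0 ≤ N / τ := div_nonneg h.N_nonneg h.isReference.τ_pos.le
  rw [coordVelocity_velocity h.lam_pos.ne', coordVelocity_velocity h.isReference.lam_pos.ne']
  refine norm_prod_le_iff.2 ⟨?_, norm_prod_le_iff.2 ⟨?_, ?_⟩⟩
  · calc _ ≤ (1 + 4 * η) * (N / τ) + D₁ * K ^ 3 * s * (N / τ) :=
          h.abs_lam_rate_sub_le (hP₁ _ _ _ _ _ _ _ h)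
      _ = (1 + 4 * η + D₁ * K ^ 3 * s) * (N / τ) := by ring
      _ ≤ _ := by
        gcongr
        exact le_add_of_nonneg_right (by positivity)
  · calc |-(S.b p / p.lam ^ 2) - -(S.b q / q.lam ^ 2)|
        = |S.b p / p.lam ^ 2 - S.b q / q.lam ^ 2| := by rw [neg_sub_neg, abs_sub_comm]
      _ ≤ (1 + 4 * η) * (N / τ) := h.abs_b_div_sq_sub_le
      _ ≤ _ := by
        gcongr ?_ * _
        have : 0 ≤ (D₁ * K ^ 3 + (6 * K + D₂ * K ^ 3) / S.weight η) * s := by positivity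
        linarith
  · calc _ ≤ (2 / (1 + S.α) + 4 * η + 6 * K * s / S.weight η) * (N / τ)
          + D₂ * K ^ 3 * s * (N / τ) / S.weight η := h.abs_w_rate_sub_le (hP₂ _ _ _ _ _ _ _ h)
      _ = (2 / (1 + S.α) + 4 * η + (6 * K + D₂ * K ^ 3) / S.weight η * s) * (N / τ) := by ring
      _ ≤ _ := by
        gcongr
        exact le_add_of_nonneg_left (by positivity)

lemma IsReference.isNear_self (h : S.IsReference η K s τ q) : S.IsNear η K s τ 0 q q where
  isReference := h
  lam_pos := h.lam_pos
  r_pos := h.r_pos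
  norm_le := by simp
  N_le := (mul_pos h.K_pos h.s_pos).le

namespace IsNear

lemma error_div_sq_le (h : S.IsNear η K s τ N p q) (hC : 0 ≤ C) :
    C * |S.b p| ^ k / p.lam ^ 2 ≤ C * (2 * K) ^ (k + 1) * (s ^ k / (s * τ)) := by
  have hK := h.isReference.K_pos
  have hs := h.isReference.s_pos
  calc C * |S.b p| ^ k / p.lam ^ 2 = C * |S.b p| ^ k * (1 / p.lam ^ 2) := by rw [mul_one_div]
    _ ≤ C * (2 * K * s) ^ k * (2 * K / (s * τ)) := by
        gcongr ?_ * ?_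
        · gcongr
          exact h.isSmall.abs_b_le
        · exact h.isSmall.one_div_sq_le
    _ = C * (2 * K) ^ (k + 1) * (s ^ k / (s * τ)) := by rw [mul_pow, pow_succ]; ring

lemma norm_coordVelocity_sub_velocity_le (h : S.IsNear η K s τ N p q) (hC : 0 ≤ C)
    (hp' : S.IsApproxVelocity (C * |S.b p| ^ k) p p') :
    ‖S.coordVelocity η p p' - S.coordVelocity η p (S.velocity p)‖
      ≤ C * (2 * K) ^ (k + 1) * (s ^ k / (s * τ)) / S.weight η := by
  have hη8 := h.isReference.η_le_eighth
  have hε : 0 < S.weight η := weight_pos h.isReference.η_pos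
  have hb : |S.b p| ≤ 1 := by linarith [h.isSmall.abs_b_le, h.isReference.small]
  refine (ModulationSystem.norm_coordVelocity_sub_velocity_le h.isReference.η_pos (by linarith)
    h.lam_pos.ne' h.r_pos.ne' hb h.abs_w_le_half hp').trans ?_
  gcongr ?_ / _
  exact h.error_div_sq_le hC

lemma abs_γ_sub_velocity_le (h : S.IsNear η K s τ N p q) (hC : 0 ≤ C)
    (hp' : S.IsApproxVelocity (C * |S.b p| ^ k) p p') :
    |p'.γ - (S.velocity p).γ| ≤ C * (2 * K) ^ (k + 1) * (s ^ k / (s * τ)) := by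
  have hlam := h.lam_pos
  calc |p'.γ - (S.velocity p).γ|
      = |p.lam ^ 2 * p'.γ - (1 + (S.β + p.w) ^ 2)| / p.lam ^ 2 := by
        rw [← abs_sq p.lam, ← abs_div, abs_sq, velocity]
        congr 1
        field_simp
    _ ≤ C * |S.b p| ^ k / p.lam ^ 2 := by gcongr; exact hp'.γ
    _ ≤ _ := h.error_div_sq_le hC

lemma abs_γ_velocity_sub_le (h : S.IsNear η K s τ N p q) (hC : 0 ≤ C)
    (hp' : S.IsApproxVelocity (C * |S.b p| ^ k) p p')
    (hq' : S.IsApproxVelocity (C * |S.b q| ^ k) q q') :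
    |p'.γ - q'.γ| ≤ 5 * (1 + (S.β + 1) ^ 2) * (K / (s * τ)) * N
      + 2 * (C * (2 * K) ^ (k + 1)) * (s ^ k / (s * τ)) := by
  have hp := h.abs_γ_sub_velocity_le hC hp'
  have hq := h.isReference.isNear_self.abs_γ_sub_velocity_le hC hq'
  have hpq : |(S.velocity p).γ - (S.velocity q).γ| ≤ _ := h.abs_phase_rate_sub_le
  rw [abs_le] at *
  constructor <;> linarith

end IsNear

lemma exists_forall_norm_coordVelocity_sub_le (S : ModulationSystem) (k : ℕ) (hη : 0 < η)
    (hK : 0 ≤ K) (hC : 0 ≤ C) : ∃ G B, 0 ≤ B ∧ ∀ s τ N p p' q q', S.IsNear η K s τ N p q →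
      S.IsApproxVelocity (C * |S.b p| ^ k) p p' → S.IsApproxVelocity (C * |S.b q| ^ k) q q' →
      ‖S.coordVelocity η p p' - S.coordVelocity η q q'‖
        ≤ (2 / (1 + S.α) + 4 * η + G * s) * (N / τ) + B * (s ^ k / (s * τ)) := by
  have hε : 0 < S.weight η := weight_pos hη
  obtain ⟨G, hG⟩ := S.exists_forall_norm_coordVelocity_velocity_sub_le hη hK
  refine ⟨G, 2 * (C * (2 * K) ^ (k + 1) / S.weight η), by positivity,
    fun s τ N p p' q q' h hp' hq' => ?_⟩
  have hp := h.norm_coordVelocity_sub_velocity_le hC hp'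
  have hq := h.isReference.isNear_self.norm_coordVelocity_sub_velocity_le hC hq'
  have hpq := hG s τ N p q h
  calc ‖S.coordVelocity η p p' - S.coordVelocity η q q'‖
      = ‖(S.coordVelocity η p p' - S.coordVelocity η p (S.velocity p))
          + (S.coordVelocity η p (S.velocity p) - S.coordVelocity η q (S.velocity q))
          - (S.coordVelocity η q q' - S.coordVelocity η q (S.velocity q))‖ := by congr 1; abel
    _ ≤ _ := (norm_sub_le _ _).trans
        (add_le_add ((norm_add_le _ _).trans (add_le_add hp hpq)) hq)
    _ = _ := by ring

variable (S) in
/-- The exponent of `b` in the blow-up laws. -/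
noncomputable def bExponent : ℝ :=
  (1 - S.α) / (1 + S.α)

lemma bExponent_pos : 0 < S.bExponent :=
  div_pos (sub_pos.2 S.α_lt_one) (add_pos one_pos S.α_pos)

lemma bExponent_add_one : S.bExponent + 1 = 2 / (1 + S.α) := by
  have := S.α_pos
  unfold bExponent
  field_simp
  ring

variable (S) in
/-- The exponent of the distance between two approximate solutions which agree at some time. -/
noncomputable def gapExponent (k : ℕ) : ℝ :=
  S.bExponent * (k - 1)

lemma lt_gapExponent (hk : 2 / (1 - S.α) + 1 < k) : 2 / (1 + S.α) < S.gapExponent k := by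
  have := S.α_pos
  have h1 : 0 < 1 - S.α := sub_pos.2 S.α_lt_one
  calc 2 / (1 + S.α) = S.bExponent * (2 / (1 - S.α)) := by
        unfold bExponent
        field_simp
    _ < S.bExponent * (k - 1) := by
        gcongr
        · exact bExponent_pos
        · linarith

lemma rpow_bExponent_pow_div (hτ : 0 < τ) :
    (τ ^ S.bExponent) ^ k / (τ ^ S.bExponent * τ) = τ ^ (S.gapExponent k - 1) := by
  rw [← Real.rpow_natCast, ← Real.rpow_mul hτ.le, ← Real.rpow_add_one hτ.ne', ← Real.rpow_sub hτ,
    gapExponent]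
  ring_nf

lemma IsApproxSolution.mono {I J : Set ℝ} {X X' : ℝ → ModState}
    (h : S.IsApproxSolution C k J X X') (hI : I ⊆ J) : S.IsApproxSolution C k I X X' where
  lam_pos t ht := h.lam_pos t (hI ht)
  r_pos t ht := h.r_pos t (hI ht)
  hasDerivAt_lam t ht := h.hasDerivAt_lam t (hI ht)
  hasDerivAt_r t ht := h.hasDerivAt_r t (hI ht)
  hasDerivAt_w t ht := h.hasDerivAt_w t (hI ht)
  hasDerivAt_γ t ht := h.hasDerivAt_γ t (hI ht)
  isApproxVelocity t ht := h.isApproxVelocity t (hI ht)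

lemma isNear_of_norm_coordVelocity_sub_lt {T tbar m κ a : ℝ} {X X' Y Y' : ℝ → ModState}
    (htbar : tbar < 0) (hm : 0 ≤ m) (hX : S.IsApproxSolution C k (Icc T tbar) X X')
    (hY : S.IsApproxSolution C k (Icc T tbar) Y Y') (hend : X tbar = Y tbar)
    (href : ∀ t ∈ Icc T tbar, S.IsReference η K ((-t) ^ a) (-t) (Y t))
    (hsmall : ∀ t ∈ Icc T tbar, m * (-t) ^ κ ≤ K * (-t) ^ a)
    (hvel : ∀ t ∈ Icc T tbar, S.IsNear η K ((-t) ^ a) (-t) (m * (-t) ^ κ) (X t) (Y t) →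
      ‖S.coordVelocity η (X t) (X' t) - S.coordVelocity η (Y t) (Y' t)‖
        < κ * m * (-t) ^ (κ - 1)) :
    ∀ t ∈ Icc T tbar, S.IsNear η K ((-t) ^ a) (-t) (m * (-t) ^ κ) (X t) (Y t) := by
  have hnear : ∀ t ∈ Icc T tbar, ‖S.coord η (X t) - S.coord η (Y t)‖ ≤ m * (-t) ^ κ →
      S.IsNear η K ((-t) ^ a) (-t) (m * (-t) ^ κ) (X t) (Y t) := fun t ht hnorm =>
    ⟨href t ht, hX.lam_pos t ht, hX.r_pos t ht, hnorm, hsmall t ht⟩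
  intro t ht
  refine hnear t ht (norm_le_mul_neg_rpow htbar
    (fun t ht => (hX.hasDerivAt_coord η ht).sub (hY.hasDerivAt_coord η ht)) ?_
    (fun t ht hnorm => hvel t ht (hnear t ht hnorm.le)) ht)
  simp only [Pi.sub_apply, hend, sub_self, norm_zero]
  exact mul_nonneg hm (Real.rpow_nonneg (neg_pos.2 htbar).le _)

lemma exists_eventually_isNear {te : ℝ} {Y Y' : ℝ → ModState} (hη : 0 < η) (hK : 0 < K)
    (hC : 0 ≤ C) (hrate : 2 / (1 + S.α) + 4 * η < S.gapExponent k) (hte : te < 0)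
    (hY : S.IsApproxSolution C k (Ico te 0) Y Y')
    (href : ∀ᶠ τ in 𝓝[>] 0, S.IsReference η K (τ ^ S.bExponent) τ (Y (-τ))) :
    ∃ m, 0 < m ∧ ∀ᶠ τ₀ in 𝓝[>] (0 : ℝ), ∀ tbar ∈ Ico (-τ₀) 0, ∀ X X',
      S.IsApproxSolution C k (Icc (-τ₀) tbar) X X' → X tbar = Y tbar → ∀ t ∈ Icc (-τ₀) tbar,
        S.IsNear η K ((-t) ^ S.bExponent) (-t) (m * (-t) ^ S.gapExponent k) (X t) (Y t) := by
  obtain ⟨G, B, hB, hGB⟩ := S.exists_forall_norm_coordVelocity_sub_le k hη hK.le hC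
  set σ := S.gapExponent k - (2 / (1 + S.α) + 4 * η)
  have hσ0 : 0 < σ := sub_pos.2 hrate
  have hgap : 0 < S.gapExponent k - S.bExponent := by linarith [S.bExponent_add_one]
  refine ⟨2 * B / σ + 1, by positivity, ?_⟩
  set m := 2 * B / σ + 1 with hm
  have hm0 : 0 < m := by positivity
  have hmσ : B < σ / 2 * m := by rw [hm, mul_add, mul_one]; field_simp; linarith
  have hsmallG : Tendsto (fun τ : ℝ => G * τ ^ S.bExponent) (𝓝[>] 0) (𝓝 0) := by
    simpa using (tendsto_rpow_nhdsGT_zero bExponent_pos).const_mul G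
  have hsmallm : Tendsto (fun τ : ℝ => m * τ ^ (S.gapExponent k - S.bExponent)) (𝓝[>] 0)
      (𝓝 0) := by simpa using (tendsto_rpow_nhdsGT_zero hgap).const_mul m
  filter_upwards [eventually_forall_Ioc_nhdsGT_zero (href.and
    ((hsmallG.eventually_le_const (half_pos hσ0)).and (hsmallm.eventually_le_const hK))),
    Ioc_mem_nhdsGT (neg_pos.2 hte)] with τ₀ hτ₀ hte₀ tbar htbar X X' hX hend
  have hY' := hY.mono (I := Icc (-τ₀) tbar) fun t ht =>
    ⟨by linarith [ht.1, hte₀.2], ht.2.trans_lt htbar.2⟩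
  have hτ : ∀ t ∈ Icc (-τ₀) tbar, -t ∈ Ioc 0 τ₀ := fun t ht =>
    ⟨by linarith [ht.2, htbar.2], by linarith [ht.1]⟩
  refine isNear_of_norm_coordVelocity_sub_lt htbar.2 hm0.le hX hY' hend
    (fun t ht => by simpa only [neg_neg] using (hτ₀ _ (hτ t ht)).1) (fun t ht => ?_)
    (fun t ht hnear => ?_)
  · have h := (hτ₀ _ (hτ t ht)).2.2
    rwa [Real.rpow_sub (hτ t ht).1, ← mul_div_assoc,
      div_le_iff₀ (Real.rpow_pos_of_pos (hτ t ht).1 _)] at h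
  · calc _ ≤ _ := hGB _ _ _ _ _ _ _ hnear (hX.isApproxVelocity t ht) (hY'.isApproxVelocity t ht)
      _ = ((2 / (1 + S.α) + 4 * η + G * (-t) ^ S.bExponent) * m + B)
            * (-t) ^ (S.gapExponent k - 1) := by
          rw [rpow_bExponent_pow_div (hτ t ht).1, mul_div_assoc,
            ← Real.rpow_sub_one (hτ t ht).1.ne']
          ring
      _ < S.gapExponent k * m * (-t) ^ (S.gapExponent k - 1) := by
          refine mul_lt_mul_of_pos_right ?_ (Real.rpow_pos_of_pos (hτ t ht).1 _)
          nlinarith [(hτ₀ _ (hτ t ht)).2.1]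

lemma exists_forall_abs_γ_sub_le {m : ℝ} (hC : 0 ≤ C) (hK : 0 ≤ K) (hm : 0 ≤ m)
    (hgap : S.bExponent < S.gapExponent k) :
    ∃ M, ∀ T tbar X X' Y Y', -1 ≤ T → tbar < 0 →
      S.IsApproxSolution C k (Icc T tbar) X X' → S.IsApproxSolution C k (Icc T tbar) Y Y' →
      X tbar = Y tbar →
      (∀ t ∈ Icc T tbar,
        S.IsNear η K ((-t) ^ S.bExponent) (-t) (m * (-t) ^ S.gapExponent k) (X t) (Y t)) →
      ∀ t ∈ Icc T tbar, |(X t).γ - (Y t).γ| ≤ M := by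
  set ν := S.gapExponent k - S.bExponent
  have hν0 : 0 < ν := sub_pos.2 hgap
  set A := 5 * (1 + (S.β + 1) ^ 2) * K * m
  set B := 2 * (C * (2 * K) ^ (k + 1))
  refine ⟨(A + B + 1) / ν, fun T tbar X X' Y Y' hT htbar hX hY hend hnear t ht => ?_⟩
  have hτ : ∀ t ∈ Icc T tbar, 0 < -t ∧ -t ≤ 1 := fun t ht =>
    ⟨by linarith [ht.2], by linarith [ht.1]⟩
  calc |(X t).γ - (Y t).γ| ≤ (A + B + 1) / ν * (-t) ^ ν := by
        refine norm_le_mul_neg_rpow htbar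
          (fun t ht => (hX.hasDerivAt_γ t ht).sub (hY.hasDerivAt_γ t ht)) ?_ (fun t ht _ => ?_) ht
        · simp only [Pi.sub_apply, hend, sub_self, norm_zero]
          exact mul_nonneg (by positivity) (Real.rpow_nonneg (neg_pos.2 htbar).le _)
        obtain ⟨hτ0, hτ1⟩ := hτ t ht
        have hpow : (-t) ^ (S.gapExponent k - 1) ≤ (-t) ^ (ν - 1) :=
          Real.rpow_le_rpow_of_exponent_ge hτ0 hτ1 (by linarith [S.bExponent_pos])
        calc _ ≤ _ := (hnear t ht).abs_γ_velocity_sub_le hC (hX.isApproxVelocity t ht)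
              (hY.isApproxVelocity t ht)
          _ = A * (-t) ^ (ν - 1) + B * (-t) ^ (S.gapExponent k - 1) := by
              rw [rpow_bExponent_pow_div hτ0, ← div_rpow_mul_rpow hτ0]
              ring
          _ ≤ (A + B) * (-t) ^ (ν - 1) := by rw [add_mul]; gcongr
          _ < (A + B + 1) * (-t) ^ (ν - 1) :=
              mul_lt_mul_of_pos_right (lt_add_one _) (Real.rpow_pos_of_pos hτ0 _)
          _ = ν * ((A + B + 1) / ν) * (-t) ^ (ν - 1) := by field_simp
    _ ≤ (A + B + 1) / ν :=
        mul_le_of_le_one_right (by positivity) (Real.rpow_le_one (hτ t ht).1.le (hτ t ht).2 hν0.le)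

variable (S) in
/-- The constant whose powers are the coefficients of the blow-up laws; `g` stands for `g∞`. -/
noncomputable def blowUpCoeff (g : ℝ) : ℝ :=
  2 * (1 + S.α) * S.β / (S.α * g)

variable (S) in
/-- The blow-up laws for the state `x` at backward time `τ = |t|`, with error constant `C`. -/
structure BlowUpLaws (g C τ : ℝ) (x : ModState) : Prop where
  b : |S.b x - 1 / (1 + S.α) * S.blowUpCoeff g ^ (2 / (1 + S.α)) * τ ^ S.bExponent|
    ≤ C * τ ^ S.bExponent * |Real.log τ| * τ ^ S.bExponent
  lam : |x.lam - S.blowUpCoeff g ^ (1 / (1 + S.α)) * τ ^ (1 / (1 + S.α))|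
    ≤ C * τ ^ (1 / (1 + S.α)) * |Real.log τ| * τ ^ S.bExponent
  r : |x.r - g * S.blowUpCoeff g ^ (S.α / (1 + S.α)) * τ ^ (S.α / (1 + S.α))|
    ≤ C * τ ^ (S.α / (1 + S.α)) * |Real.log τ| * τ ^ S.bExponent
  w : |x.w| ≤ C * τ ^ (2 * (1 - S.α) / (1 + S.α))
  γ : |x.γ - (1 + S.β ^ 2) * ((1 - S.α) / (1 + S.α)) ^ ((1 - S.α) / (1 + S.α))
      * (2 * (1 - S.α) * S.β / (S.α * g)) ^ (-2 / (1 + S.α)) * τ ^ (-(1 - S.α) / (1 + S.α))|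
    ≤ C * (1 + |Real.log τ|)

lemma blowUpCoeff_pos (hg : 0 < g) : 0 < S.blowUpCoeff g := by
  have := S.α_pos
  have := S.β_pos
  unfold blowUpCoeff
  positivity

lemma bExponent_le_wExponent : S.bExponent ≤ 2 * (1 - S.α) / (1 + S.α) := by
  linarith [S.bExponent_pos, mul_div_assoc 2 (1 - S.α) (1 + S.α), bExponent.eq_1 S]

section Reference

variable {Y : ℝ → ModState}

lemma tendsto_b_div_rpow (laws : ∀ᶠ τ in 𝓝[>] 0, S.BlowUpLaws g C τ (Y (-τ))) :
    Tendsto (fun τ => S.b (Y (-τ)) / τ ^ S.bExponent) (𝓝[>] 0)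
      (𝓝 (1 / (1 + S.α) * S.blowUpCoeff g ^ (2 / (1 + S.α)))) :=
  tendsto_div_rpow_of_abs_sub_le bExponent_pos (laws.mono fun _ h => h.b)

lemma tendsto_div_lam_sq (hg : 0 < g)
    (laws : ∀ᶠ τ in 𝓝[>] 0, S.BlowUpLaws g C τ (Y (-τ))) :
    Tendsto (fun τ => τ ^ S.bExponent * τ / (Y (-τ)).lam ^ 2) (𝓝[>] 0)
      (𝓝 (S.blowUpCoeff g ^ (2 / (1 + S.α)))⁻¹) := by
  have hA : 0 < S.blowUpCoeff g := blowUpCoeff_pos hg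
  have hsq : ∀ {y : ℝ}, 0 < y → (y ^ (1 / (1 + S.α))) ^ 2 = y ^ (2 / (1 + S.α)) := fun hy => by
    rw [← Real.rpow_mul_natCast hy.le]
    congr 1
    push_cast
    ring
  have hlim := ((tendsto_div_rpow_of_abs_sub_le bExponent_pos
    (laws.mono fun _ h => h.lam)).pow 2).inv₀ (pow_pos (Real.rpow_pos_of_pos hA _) 2).ne'
  rw [hsq hA] at hlim
  refine hlim.congr' ?_
  filter_upwards [self_mem_nhdsWithin] with τ hτ
  rw [div_pow, hsq hτ, inv_div, ← bExponent_add_one, Real.rpow_add_one (ne_of_gt hτ)]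

lemma exists_eventually_isReference (hη : 0 < η) (hη8 : η ≤ 1 / 8) (hηβ : η ≤ S.β / 2)
    (hg : 0 < g) (hpos : ∀ᶠ τ in 𝓝[>] 0, 0 < (Y (-τ)).lam ∧ 0 < (Y (-τ)).r)
    (laws : ∀ᶠ τ in 𝓝[>] 0, S.BlowUpLaws g C τ (Y (-τ))) :
    ∃ K, 0 < K ∧ ∀ᶠ τ in 𝓝[>] 0, S.IsReference η K (τ ^ S.bExponent) τ (Y (-τ)) := by
  have hα := S.α_pos
  have hb := tendsto_b_div_rpow laws
  have hlam := tendsto_div_lam_sq hg laws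
  set A := S.blowUpCoeff g ^ (2 / (1 + S.α))
  have hA : 0 < A := Real.rpow_pos_of_pos (blowUpCoeff_pos hg) _
  have hrate : 1 / (1 + S.α) * A * A⁻¹ < (1 + η) / (1 + S.α) := by
    rw [mul_inv_cancel_right₀ hA.ne']
    gcongr
    linarith
  obtain ⟨K, hK0, hCK, hAK, hAK'⟩ :
      ∃ K : ℝ, 0 < K ∧ C < K ∧ |1 / (1 + S.α) * A| < K ∧ A⁻¹ < K := by
    simpa only [max_lt_iff] using exists_gt (max 0 (max C (max |1 / (1 + S.α) * A| A⁻¹)))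
  have hsmall : Tendsto (fun τ : ℝ => 3 * K * τ ^ S.bExponent) (𝓝[>] 0) (𝓝 0) := by
    simpa using (tendsto_rpow_nhdsGT_zero bExponent_pos).const_mul (3 * K)
  refine ⟨K, hK0, ?_⟩
  filter_upwards [hpos, laws, hb.abs.eventually_le_const hAK, hlam.eventually_le_const hAK',
    (hb.mul hlam).eventually_le_const hrate, hsmall.eventually_le_const hη, Ioc_mem_nhdsGT one_pos]
    with τ ⟨hlam0, hr0⟩ hlaws hbK hlamK hbτ hs_small hτ
  have hs : 0 < τ ^ S.bExponent := Real.rpow_pos_of_pos hτ.1 _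
  refine ⟨⟨hs, hτ.1, hlam0, hr0, ?_, ?_, ?_⟩, hη, hη8, hηβ, by linarith, ?_⟩
  · rwa [abs_div, abs_of_pos hs, div_le_iff₀ hs] at hbK
  · exact hlaws.w.trans (mul_le_mul hCK.le (Real.rpow_le_rpow_of_exponent_ge hτ.1 hτ.2
      bExponent_le_wExponent) (Real.rpow_nonneg hτ.1.le _) hK0.le)
  · rwa [div_le_div_iff₀ (by positivity) (mul_pos hs hτ.1), one_mul,
      ← div_le_iff₀ (by positivity)]
  · rw [← div_div, le_div_iff₀ hτ.1]
    convert hbτ using 1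
    field_simp

end Reference

lemma IsNear.blowUpLaws {C' : ℝ} (h : S.IsNear η K s τ (m * τ ^ κ) p q)
    (hq : S.BlowUpLaws g C τ q) (hγ : |p.γ - q.γ| ≤ M) (hg : 0 < g) (hm : 0 ≤ m)
    (hκ : 2 / (1 + S.α) ≤ κ) (hτ1 : τ ≤ 1) (hlog : 1 ≤ |Real.log τ|)
    (hb : 4 * m * (1 / (1 + S.α) * S.blowUpCoeff g ^ (2 / (1 + S.α))) + 2 * C ≤ C')
    (hlam : 4 * m * S.blowUpCoeff g ^ (1 / (1 + S.α)) + 2 * C ≤ C')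
    (hr : 4 * m * (g * S.blowUpCoeff g ^ (S.α / (1 + S.α))) + 2 * C ≤ C')
    (hw : m + C ≤ C') (hphase : M + C ≤ C') : S.BlowUpLaws g C' τ p := by
  have hα := S.α_pos
  have hA : 0 < S.blowUpCoeff g := blowUpCoeff_pos hg
  have hτ := h.isReference.τ_pos
  have hM : 0 ≤ M := (abs_nonneg _).trans hγ
  have hN : 0 ≤ 4 * (m * τ ^ κ) := by linarith [h.N_nonneg]
  have hN1 : 4 * (m * τ ^ κ) ≤ 1 := by linarith [h.three_mul_N_le, h.isReference.η_le_eighth]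
  have hNa : 4 * (m * τ ^ κ) ≤ 4 * m * τ ^ S.bExponent := by
    rw [← mul_assoc]
    gcongr 4 * m * ?_
    exact Real.rpow_le_rpow_of_exponent_ge hτ hτ1 (by linarith [S.bExponent_add_one])
  have hNw : m * τ ^ κ ≤ m * τ ^ (2 * (1 - S.α) / (1 + S.α)) := by
    refine mul_le_mul_of_nonneg_left (Real.rpow_le_rpow_of_exponent_ge hτ hτ1 (hκ.trans' ?_)) hm
    gcongr
    linarith
  refine ⟨abs_sub_mul_rpow_le h.abs_b_sub_le hq.b hN hN1 hNa (by positivity) hτ.le hlog hb,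
    abs_sub_mul_rpow_le h.abs_lam_sub_le hq.lam hN hN1 hNa (by positivity) hτ.le hlog hlam,
    abs_sub_mul_rpow_le h.abs_r_sub_le hq.r hN hN1 hNa (by positivity) hτ.le hlog hr, ?_, ?_⟩
  · calc |p.w| ≤ |p.w - q.w| + |q.w| := by simpa using abs_add_le (p.w - q.w) q.w
      _ ≤ m * τ ^ (2 * (1 - S.α) / (1 + S.α)) + C * τ ^ (2 * (1 - S.α) / (1 + S.α)) :=
          add_le_add (h.abs_w_sub_le_N.trans hNw) hq.w
      _ ≤ C' * τ ^ (2 * (1 - S.α) / (1 + S.α)) := by rw [← add_mul]; gcongr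
  · refine (abs_sub_le _ q.γ _).trans ((add_le_add hγ hq.γ).trans ?_)
    calc M + C * (1 + |Real.log τ|) ≤ M * (1 + |Real.log τ|) + C * (1 + |Real.log τ|) := by
          gcongr
          exact le_mul_of_one_le_right hM (by linarith)
      _ ≤ C' * (1 + |Real.log τ|) := by rw [← add_mul]; gcongr

lemma exists_forall_blowUpLaws (hg : 0 < g) (hm : 0 ≤ m) (hκ : 2 / (1 + S.α) ≤ κ) (C M : ℝ) :
    ∃ C', 0 < C' ∧ ∀ η K s τ p q, S.IsNear η K s τ (m * τ ^ κ) p q → S.BlowUpLaws g C τ q →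
      |p.γ - q.γ| ≤ M → τ ≤ 1 → 1 ≤ |Real.log τ| → S.BlowUpLaws g C' τ p := by
  obtain ⟨C', h0, hb, hlam, hr, hw, hphase⟩ : ∃ C', 0 < C' ∧
      4 * m * (1 / (1 + S.α) * S.blowUpCoeff g ^ (2 / (1 + S.α))) + 2 * C < C' ∧
      4 * m * S.blowUpCoeff g ^ (1 / (1 + S.α)) + 2 * C < C' ∧
      4 * m * (g * S.blowUpCoeff g ^ (S.α / (1 + S.α))) + 2 * C < C' ∧
      m + C < C' ∧ M + C < C' := by
    simpa only [max_lt_iff] using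
      exists_gt (α := ℝ) (max _ (max _ (max _ (max _ (max _ _)))))
  exact ⟨C', h0, fun η K s τ p q h hq hγ hτ1 hlog =>
    h.blowUpLaws hq hγ hg hm hκ hτ1 hlog hb.le hlam.le hr.le hw.le hphase.le⟩

lemma exists_eventually_blowUpLaws {te : ℝ} {Y Y' : ℝ → ModState} (hg : 0 < g) (hC₁ : 0 ≤ C₁)
    (hK : 0 ≤ K) (hm : 0 ≤ m) (hk : 2 / (1 - S.α) + 1 < k) (hte : te < 0)
    (hY : S.IsApproxSolution C₁ k (Ico te 0) Y Y')
    (laws : ∀ t ∈ Ico te 0, S.BlowUpLaws g C₀ |t| (Y t))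
    (hnear : ∀ᶠ τ₀ in 𝓝[>] (0 : ℝ), ∀ tbar ∈ Ico (-τ₀) 0, ∀ X X',
      S.IsApproxSolution C₁ k (Icc (-τ₀) tbar) X X' → X tbar = Y tbar → ∀ t ∈ Icc (-τ₀) tbar,
        S.IsNear η K ((-t) ^ S.bExponent) (-t) (m * (-t) ^ S.gapExponent k) (X t) (Y t)) :
    ∃ C, 0 < C ∧ ∀ᶠ τ₀ in 𝓝[>] (0 : ℝ), ∀ tbar ∈ Ico (-τ₀) 0, ∀ X X',
      S.IsApproxSolution C₁ k (Icc (-τ₀) tbar) X X' → X tbar = Y tbar → ∀ t ∈ Icc (-τ₀) tbar,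
        S.BlowUpLaws g C |t| (X t) := by
  have hκ := S.lt_gapExponent hk
  obtain ⟨M, hphase⟩ := S.exists_forall_abs_γ_sub_le (η := η) (k := k) hC₁ hK hm
    (by linarith [S.bExponent_add_one])
  obtain ⟨C, hC, hlaws⟩ := exists_forall_blowUpLaws hg hm hκ.le C₀ M
  refine ⟨C, hC, ?_⟩
  filter_upwards [hnear, eventually_forall_Ioc_nhdsGT_zero eventually_one_le_abs_log_nhdsGT_zero,
    Ioc_mem_nhdsGT one_pos, Ioc_mem_nhdsGT (neg_pos.2 hte)]
    with τ₀ hnear hlog hτ₀ hτ₀te tbar htbar X X' hX hend t ht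
  have hsub : Icc (-τ₀) tbar ⊆ Ico te 0 := fun t ht =>
    ⟨by linarith [ht.1, hτ₀te.2], ht.2.trans_lt htbar.2⟩
  have hτ : -t ∈ Ioc 0 τ₀ := ⟨by linarith [ht.2, htbar.2], by linarith [ht.1]⟩
  have hYt := laws t (hsub ht)
  rw [abs_of_neg (neg_pos.1 hτ.1)] at hYt ⊢
  exact hlaws _ _ _ _ _ _ (hnear tbar htbar X X' hX hend t ht) hYt
    (hphase _ _ _ _ _ _ (by linarith [hτ₀.2]) htbar.2 hX (hY.mono hsub) hend
      (hnear tbar htbar X X' hX hend) t ht) (hτ.2.trans hτ₀.2) (hlog _ hτ)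

end ModulationSystem

theorem stmt16_general (S : ModulationSystem) {k : ℕ} (hk : 2 / (1 - S.α) + 1 < k)
    {te g C₀ C₁ : ℝ} (hte : te < 0) (hg : 0 < g) (hC₁ : 0 ≤ C₁) {Y Y' : ℝ → ModState}
    (hY : S.IsApproxSolution C₁ k (Ico te 0) Y Y')
    (laws : ∀ t ∈ Ico te 0, S.BlowUpLaws g C₀ |t| (Y t)) :
    ∃ tun tbar0 C, te ≤ tun ∧ tun < tbar0 ∧ tbar0 < 0 ∧ 0 < C ∧ ∀ tbar ∈ Ico tbar0 0, ∀ X X',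
      S.IsApproxSolution C₁ k (Icc tun tbar) X X' → X tbar = Y tbar →
        ∀ t ∈ Icc tun tbar, S.BlowUpLaws g C |t| (X t) := by
  have hκ := S.lt_gapExponent hk
  obtain ⟨η, hη, hη8, hηβ, hηκ⟩ : ∃ η : ℝ, 0 < η ∧ η < 1 / 8 ∧ η < S.β / 2 ∧
      η < (S.gapExponent k - 2 / (1 + S.α)) / 4 := by
    simpa only [lt_min_iff] using exists_between (show (0 : ℝ) < min _ (min _ _) from
      lt_min (by norm_num) (lt_min (half_pos S.β_pos) (div_pos (sub_pos.2 hκ) four_pos)))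
  have hmem : ∀ᶠ τ in 𝓝[>] (0 : ℝ), 0 < τ ∧ -τ ∈ Ico te 0 := by
    filter_upwards [Ioc_mem_nhdsGT (neg_pos.2 hte)] with τ hτ
    exact ⟨hτ.1, by linarith [hτ.2], neg_neg_iff_pos.2 hτ.1⟩
  obtain ⟨K, hK, href⟩ := S.exists_eventually_isReference hη hη8.le hηβ.le hg
    (hmem.mono fun τ hτ => ⟨hY.lam_pos _ hτ.2, hY.r_pos _ hτ.2⟩)
    (hmem.mono fun τ hτ => by simpa only [abs_neg, abs_of_pos hτ.1] using laws _ hτ.2)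
  obtain ⟨m, hm, hnear⟩ := S.exists_eventually_isNear hη hK hC₁ (by linarith) hte hY href
  obtain ⟨C, hC, hlaws⟩ :=
    S.exists_eventually_blowUpLaws hg hC₁ hK.le hm.le hk hte hY laws hnear
  obtain ⟨τ₀, ⟨hτ₀, hmem₀⟩, hlaws⟩ := (hmem.and hlaws).exists
  exact ⟨-τ₀, -τ₀ / 2, C, hmem₀.1, by linarith, by linarith, hC, fun tbar htbar =>
    hlaws tbar ⟨by linarith [htbar.1], htbar.2⟩⟩

/-- stability of the modulation equations under `O(b^k)` perturbations:
let `0 < α < 1`, `β∞ > 0`, `k > 2/(1-α) + 1`, and let `(λ_e, b_e, β̃_e, r_e, γ_e)` be the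
exact solution of the modulation system on `[t_e, 0)` with blow-up laws governed by
`g∞ > 0`, `|g∞ - 1|` small. Then there exist a universal backward time `t̲ < 0`
(independent of `t̄`) and a constant `C` such that any solution of the perturbed system
(with `O(b^k)` errors, constant `C₁`), matching the exact solution at a small enough
time `t̄ < 0`, obeys the same asymptotic laws on `[t̲, t̄]`.
The system is written in the original time `t` (`ds/dt = 1/λ²`), so `λ_s/λ = λλ_t`,
`r_s/λ = λr_t`, `β̃_s = λ²β̃_t`, `γ_s = λ²γ_t`. -/
theorem stmt16 (α βinf : ℝ) (hα0 : 0 < α) (hα1 : α < 1) (hβ : 0 < βinf)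
    (k : ℕ) (hk : 2 / (1 - α) + 1 < (k : ℝ))
    (c₁ c₂ : ℕ → ℕ → ℝ) (P₁ P₂ : ℝ → ℝ → ℝ)
    (hP₁ : ∀ b bt : ℝ, P₁ b bt =
      ∑ j ∈ Finset.range k, ∑ l ∈ Finset.range k,
        if 3 ≤ j + l ∧ j + l ≤ k - 1 then c₁ j l * b ^ j * bt ^ l else 0)
    (hP₂ : ∀ b bt : ℝ, P₂ b bt = -2 * b * bt +
      ∑ j ∈ Finset.range k, ∑ l ∈ Finset.range k,
        if 3 ≤ j + l ∧ j + l ≤ k - 1 then c₂ j l * b ^ j * bt ^ l else 0)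
    (te ginf : ℝ) (hte : te < 0) (hginf : 0 < ginf) (hginf1 : |ginf - 1| ≤ 1 / 2)
    (lamE bE btE rE γE : ℝ → ℝ)
    -- the exact solution of the unperturbed modulation system on [t_e, 0):
    (hposE : ∀ t ∈ Set.Ico te (0 : ℝ), 0 < lamE t ∧ 0 < rE t)
    (hbE : ∀ t ∈ Set.Ico te (0 : ℝ), bE t = 2 * (βinf + btE t) / α * (lamE t / rE t))
    (hlamE : ∀ t ∈ Set.Ico te (0 : ℝ),
      HasDerivAt lamE ((P₁ (bE t) (btE t) - bE t) / lamE t) t)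
    (hrE : ∀ t ∈ Set.Ico te (0 : ℝ), HasDerivAt rE (-2 * (βinf + btE t) / lamE t) t)
    (hbtE : ∀ t ∈ Set.Ico te (0 : ℝ), HasDerivAt btE (P₂ (bE t) (btE t) / lamE t ^ 2) t)
    (hγE : ∀ t ∈ Set.Ico te (0 : ℝ),
      HasDerivAt γE ((1 + (βinf + btE t) ^ 2) / lamE t ^ 2) t)
    -- the exact solution obeys the asymptotic blow-up laws governed by g∞:
    (Ce : ℝ) (hCe : 0 < Ce)
    (hasymE : ∀ t ∈ Set.Ico te (0 : ℝ),
      |bE t - 1 / (1 + α) * (2 * (1 + α) * βinf / (α * ginf)) ^ (2 / (1 + α))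
          * (abs t) ^ ((1 - α) / (1 + α))|
        ≤ Ce * (abs t) ^ ((1 - α) / (1 + α)) * |Real.log (abs t)|
            * (abs t) ^ ((1 - α) / (1 + α)) ∧
      |lamE t - (2 * (1 + α) * βinf / (α * ginf)) ^ (1 / (1 + α))
          * (abs t) ^ (1 / (1 + α))|
        ≤ Ce * (abs t) ^ (1 / (1 + α)) * |Real.log (abs t)|
            * (abs t) ^ ((1 - α) / (1 + α)) ∧
      |rE t - ginf * (2 * (1 + α) * βinf / (α * ginf)) ^ (α / (1 + α))
          * (abs t) ^ (α / (1 + α))|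
        ≤ Ce * (abs t) ^ (α / (1 + α)) * |Real.log (abs t)|
            * (abs t) ^ ((1 - α) / (1 + α)) ∧
      |btE t| ≤ Ce * (abs t) ^ (2 * (1 - α) / (1 + α)) ∧
      |γE t - (1 + βinf ^ 2) * ((1 - α) / (1 + α)) ^ ((1 - α) / (1 + α))
          * (2 * (1 - α) * βinf / (α * ginf)) ^ (-2 / (1 + α))
          * (abs t) ^ (-(1 - α) / (1 + α))|
        ≤ Ce * (1 + |Real.log (abs t)|))
    -- the size of the O(b^k) errors in the perturbed system:
    (C₁ : ℝ) (hC₁ : 0 < C₁) :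
    ∃ tun tbar0 C : ℝ, te ≤ tun ∧ tun < tbar0 ∧ tbar0 < 0 ∧ 0 < C ∧
      ∀ tbar ∈ Set.Ico tbar0 (0 : ℝ),
      ∀ lam b bt r γ lam' r' bt' γ' : ℝ → ℝ,
        -- the perturbed solution on [t̲, t̄]: positivity, constraint, derivatives,
        (∀ t ∈ Set.Icc tun tbar, 0 < lam t ∧ 0 < r t ∧ 0 < b t) →
        (∀ t ∈ Set.Icc tun tbar, b t = 2 * (βinf + bt t) / α * (lam t / r t)) →
        (∀ t ∈ Set.Icc tun tbar, HasDerivAt lam (lam' t) t) →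
        (∀ t ∈ Set.Icc tun tbar, HasDerivAt r (r' t) t) →
        (∀ t ∈ Set.Icc tun tbar, HasDerivAt bt (bt' t) t) →
        (∀ t ∈ Set.Icc tun tbar, HasDerivAt γ (γ' t) t) →
        -- the perturbed modulation equations with O(b^k) right-hand sides,
        (∀ t ∈ Set.Icc tun tbar,
          |lam t * lam' t + b t - P₁ (b t) (bt t)| ≤ C₁ * b t ^ k) →
        (∀ t ∈ Set.Icc tun tbar,
          |lam t * r' t + 2 * (βinf + bt t)| ≤ C₁ * b t ^ k) →
        (∀ t ∈ Set.Icc tun tbar,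
          |lam t ^ 2 * bt' t - P₂ (b t) (bt t)| ≤ C₁ * b t ^ k) →
        (∀ t ∈ Set.Icc tun tbar,
          |lam t ^ 2 * γ' t - (1 + (βinf + bt t) ^ 2)| ≤ C₁ * b t ^ k) →
        -- matching the exact solution at time t̄,
        lam tbar = lamE tbar → b tbar = bE tbar → bt tbar = btE tbar →
        r tbar = rE tbar → γ tbar = γE tbar →
        -- conclusion: the same asymptotic laws on [t̲, t̄].
        ∀ t ∈ Set.Icc tun tbar,
          |b t - 1 / (1 + α) * (2 * (1 + α) * βinf / (α * ginf)) ^ (2 / (1 + α))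
              * (abs t) ^ ((1 - α) / (1 + α))|
            ≤ C * (abs t) ^ ((1 - α) / (1 + α)) * |Real.log (abs t)|
                * (abs t) ^ ((1 - α) / (1 + α)) ∧
          |lam t - (2 * (1 + α) * βinf / (α * ginf)) ^ (1 / (1 + α))
              * (abs t) ^ (1 / (1 + α))|
            ≤ C * (abs t) ^ (1 / (1 + α)) * |Real.log (abs t)|
                * (abs t) ^ ((1 - α) / (1 + α)) ∧
          |r t - ginf * (2 * (1 + α) * βinf / (α * ginf)) ^ (α / (1 + α))
              * (abs t) ^ (α / (1 + α))|
            ≤ C * (abs t) ^ (α / (1 + α)) * |Real.log (abs t)|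
                * (abs t) ^ ((1 - α) / (1 + α)) ∧
          |bt t| ≤ C * (abs t) ^ (2 * (1 - α) / (1 + α)) ∧
          |γ t - (1 + βinf ^ 2) * ((1 - α) / (1 + α)) ^ ((1 - α) / (1 + α))
              * (2 * (1 - α) * βinf / (α * ginf)) ^ (-2 / (1 + α))
              * (abs t) ^ (-(1 - α) / (1 + α))|
            ≤ C * (1 + |Real.log (abs t)|) := by
  let S : ModulationSystem := ⟨α, βinf, P₁, P₂, hα0, hα1, hβ,
    funext₂ hP₁ ▸ VanishesToThirdOrder.sum_monomial k c₁,
    by simpa [hP₂] using VanishesToThirdOrder.sum_monomial k c₂⟩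
  let Y : ℝ → ModState := fun t => ⟨lamE t, rE t, btE t, γE t⟩
  have hY : S.IsApproxSolution C₁ k (Ico te 0) Y fun t => S.velocity (Y t) :=
    S.isApproxSolution_velocity hC₁.le (fun t ht => (hposE t ht).1) (fun t ht => (hposE t ht).2)
      (fun t ht => by have h := hlamE t ht; rwa [hbE t ht] at h) hrE
      (fun t ht => by have h := hbtE t ht; rwa [hbE t ht] at h) hγE
  have laws : ∀ t ∈ Ico te 0, S.BlowUpLaws ginf Ce |t| (Y t) := fun t ht => by
    obtain ⟨hb, hlam, hr, hw, hγ⟩ := hasymE t ht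
    rw [hbE t ht] at hb
    exact ⟨hb, hlam, hr, hw, hγ⟩
  obtain ⟨tun, tbar0, C, hte_tun, htun, htbar0, hC, hlaws⟩ :=
    stmt16_general S hk hte hginf hC₁.le hY laws
  refine ⟨tun, tbar0, C, hte_tun, htun, htbar0, hC, fun tbar htbar lam b bt r γ lam' r' bt' γ'
    hpos hb hlam' hr' hbt' hγ' hElam hEr hEbt hEγ hlam _ hbt hr hγ t ht => ?_⟩
  have hX : S.IsApproxSolution C₁ k (Icc tun tbar) (fun t => ⟨lam t, r t, bt t, γ t⟩)
      fun t => ⟨lam' t, r' t, bt' t, γ' t⟩ :=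
    ⟨fun t ht => (hpos t ht).1, fun t ht => (hpos t ht).2.1, hlam', hr', hbt', hγ', fun t ht =>
      S.isApproxVelocity_of_b_eq (hb t ht).symm hC₁.le (hElam t ht) (hEr t ht) (hEbt t ht)
        (hEγ t ht)⟩
  have h := hlaws tbar htbar _ _ hX (by simp only [hlam, hbt, hr, hγ, Y]) t ht
  exact ⟨hb t ht ▸ h.b, h.lam, h.r, h.w, h.γ⟩
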